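/- arXiv:2504.17245 — 11 statements merged into one kernel-verified Lean document; each statement's English description precedes it below -/
import Mathlib

section
/- For every integer r ≥ 1, the identity ∑_{t=1}^{r} ∏_{k=1}^{t} ((y − x^{k−1})(x^{r+1−k} − 1))/(x^{k} − 1) = y^{r} − 1 holds in K. -/
/-- `K = ℚ(x, y)`, the field of rational functions in two independent
indeterminates over `ℚ`. -/
noncomputable abbrev K : Type := FractionRing (MvPolynomial (Fin 2) ℚ)

/-- The indeterminate `x` viewed inside `K`. -/
noncomputable def X : K := algebraMap (MvPolynomial (Fin 2) ℚ) K (MvPolynomial.X 0)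

/-- The indeterminate `y` viewed inside `K`. -/
noncomputable def Y : K := algebraMap (MvPolynomial (Fin 2) ℚ) K (MvPolynomial.X 1)

noncomputable def gB (x : K) : ℕ → ℕ → K
  | _, 0 => 1
  | 0, _ + 1 => 0
  | r + 1, t + 1 => gB x r t + x ^ (t + 1) * gB x r (t + 1)

theorem gB_zero (x : K) (r : ℕ) : gB x r 0 = 1 := by cases r <;> rfl

theorem gB_succ (x : K) (r t : ℕ) :
    gB x (r + 1) (t + 1) = gB x r t + x ^ (t + 1) * gB x r (t + 1) := rfl

theorem gB_vanish (x : K) (r : ℕ) : ∀ t, r < t → gB x r t = 0 := by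
  induction r with
  | zero =>
    intro t ht
    obtain ⟨s, rfl⟩ : ∃ s, t = s + 1 := ⟨t - 1, by omega⟩
    rfl
  | succ r ih =>
    intro t ht
    obtain ⟨s, rfl⟩ : ∃ s, t = s + 1 := ⟨t - 1, by omega⟩
    rw [gB_succ, ih s (by omega), ih (s + 1) (by omega)]; ring

theorem gB_ratio (x : K) (r : ℕ) : ∀ t,
    gB x r (t + 1) * (x ^ (t + 1) - 1) = gB x r t * (x ^ (r - t) - 1) := by
  induction r with
  | zero => intro t; rw [gB_vanish x 0 (t + 1) (by omega)]; simp
  | succ r ih =>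
    intro t
    cases t with
    | zero =>
      have h := ih 0
      rw [gB_succ]
      simp only [gB_zero, Nat.sub_zero, zero_add, pow_one] at h ⊢
      linear_combination x * h
    | succ t =>
      have e : r + 1 - (t + 1) = r - t := by omega
      rcases Nat.lt_or_ge t r with hlt | hge
      · obtain ⟨d, rfl⟩ : ∃ d, r = t + 1 + d := ⟨r - (t + 1), by omega⟩
        have h1 := ih (t + 1)
        have h0 := ih t
        have e1 : t + 1 + d - (t + 1) = d := by omega
        have e2 : t + 1 + d - t = d + 1 := by omega
        rw [e, gB_succ, gB_succ]
        rw [e1] at h1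
        rw [e2] at h0 ⊢
        linear_combination x ^ (t + 2) * h1 + h0
      · have e3 : r - t = 0 := by omega
        rw [e, e3, gB_vanish x (r + 1) (t + 1 + 1) (by omega)]; simp

theorem gB_sum (x y : K) (r : ℕ) :
    ∑ t ∈ Finset.range (r + 1), gB x r t * ∏ j ∈ Finset.range t, (y - x ^ j) = y ^ r := by
  induction r with
  | zero => simp [gB_zero]
  | succ r ih =>
    have h : ∑ t ∈ Finset.range (r + 1 + 1),
        x ^ t * gB x r t * ∏ j ∈ Finset.range t, (y - x ^ j)
        = ∑ t ∈ Finset.range (r + 1), x ^ t * gB x r t * ∏ j ∈ Finset.range t, (y - x ^ j) := by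
      rw [Finset.sum_range_succ, gB_vanish x r (r + 1) (by omega)]; simp
    rw [Finset.sum_range_succ'] at h
    rw [Finset.sum_range_succ']
    simp only [gB_succ, add_mul, Finset.sum_add_distrib]
    simp only [gB_zero, pow_zero, one_mul] at h ⊢
    rw [add_assoc, h, ← Finset.sum_add_distrib, pow_succ, ← ih, Finset.sum_mul]
    refine Finset.sum_congr rfl fun t _ => ?_
    rw [Finset.prod_range_succ]; ring

theorem X_pow_ne (k : ℕ) : X ^ (k + 1) - 1 ≠ 0 := by
  intro h
  have h1 : (algebraMap (MvPolynomial (Fin 2) ℚ) K) (MvPolynomial.X 0 ^ (k + 1)) =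
      algebraMap (MvPolynomial (Fin 2) ℚ) K 1 := by
    rw [map_pow, map_one]; exact sub_eq_zero.mp h
  have h2 := IsFractionRing.injective (MvPolynomial (Fin 2) ℚ) K h1
  have h3 := congrArg (MvPolynomial.eval (fun _ => (0 : ℚ))) h2
  simp at h3

theorem prod_eq (r t : ℕ) :
    ∏ k ∈ Finset.Icc 1 t, ((Y - X ^ (k - 1)) * (X ^ (r + 1 - k) - 1)) / (X ^ k - 1)
      = gB X r t * ∏ j ∈ Finset.range t, (Y - X ^ j) := by
  induction t with
  | zero => simp [gB_zero]
  | succ t ih =>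
    rw [Finset.prod_Icc_succ_top (by omega), ih, Finset.prod_range_succ]
    have e : r + 1 - (t + 1) = r - t := by omega
    rw [e, Nat.add_sub_cancel, mul_div_assoc', div_eq_iff (X_pow_ne t)]
    linear_combination (-(∏ j ∈ Finset.range t, (Y - X ^ j)) * (Y - X ^ t)) * gB_ratio X r t

/-- For every integer `r ≥ 1`,
`∑_{t=1}^{r} ∏_{k=1}^{t} ((y − x^{k−1})(x^{r+1−k} − 1))/(x^{k} − 1) = y^{r} − 1` in `K`. -/
theorem sum_prod_identity (r : ℕ) (hr : 1 ≤ r) :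
    ∑ t ∈ Finset.Icc 1 r, ∏ k ∈ Finset.Icc 1 t,
      ((Y - X ^ (k - 1)) * (X ^ (r + 1 - k) - 1)) / (X ^ k - 1)
      = Y ^ r - 1 := by
  rw [Finset.sum_congr rfl fun t _ => prod_eq r t, ← gB_sum X Y r, Finset.sum_range_succ',
    ← Finset.Ico_add_one_right_eq_Icc, Finset.sum_Ico_eq_sum_range]
  simp [gB_zero, add_comm]
end

section
/- For every integer r ≥ 1, the identity ∑_{t=1}^{r} ∏_{k=1}^{t} ((x^{k−1} y − 1)(x^{r+1−k} − 1))/((x^{r−k} − y)(x^{k} − 1)) = −1 holds in K. -/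
theorem ne_zero_of_eval_aux (p : MvPolynomial (Fin 2) ℚ) (f : Fin 2 → ℚ)
    (h : MvPolynomial.eval f p ≠ 0) : algebraMap (MvPolynomial (Fin 2) ℚ) K p ≠ 0 := by
  intro h0
  have : p = 0 := by
    apply IsFractionRing.injective (MvPolynomial (Fin 2) ℚ) K
    rw [h0, map_zero]
  exact h (by rw [this, map_zero])

theorem X_pow_sub_Y_ne (n : ℕ) : X ^ n - Y ≠ 0 := by
  have := ne_zero_of_eval_aux (MvPolynomial.X 0 ^ n - MvPolynomial.X 1) ![1, 0] (by simp)
  simpa [X, Y] using this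

theorem X_pow_sub_one_ne (n : ℕ) (hn : 1 ≤ n) : X ^ n - 1 ≠ 0 := by
  have := ne_zero_of_eval_aux (MvPolynomial.X 0 ^ n - 1) ![2, 0] (by
    have : (1 : ℚ) < 2 ^ n := one_lt_pow₀ (by norm_num) (by omega)
    simp
    linarith)
  simpa only [X, map_sub, map_pow, map_one] using this

theorem Y_sub_one_ne : Y - 1 ≠ 0 := by
  have := ne_zero_of_eval_aux (MvPolynomial.X 1 - 1) ![2, 0] (by simp)
  simpa only [Y, map_sub, map_pow, map_one] using this

theorem partial_sum_aux (r T : ℕ) (hT : T ≤ r) :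
    (1 + ∑ t ∈ Finset.Icc 1 T, ∏ k ∈ Finset.Icc 1 t,
      ((X ^ (k - 1) * Y - 1) * (X ^ (r + 1 - k) - 1)) /
        ((X ^ (r - k) - Y) * (X ^ k - 1))) * ((Y - 1) * (X ^ r - 1))
      = (∏ k ∈ Finset.Icc 1 T,
      ((X ^ (k - 1) * Y - 1) * (X ^ (r + 1 - k) - 1)) /
        ((X ^ (r - k) - Y) * (X ^ k - 1))) * ((X ^ T * Y - 1) * (X ^ (r - T) - 1)) := by
  induction T with
  | zero => simp
  | succ T ih =>
    have ih := ih (by omega)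
    rw [Finset.sum_Icc_succ_top (by omega), ← add_assoc, add_mul, ih,
      Finset.prod_Icc_succ_top (by omega)]
    generalize (∏ k ∈ Finset.Icc 1 T,
      ((X ^ (k - 1) * Y - 1) * (X ^ (r + 1 - k) - 1)) /
        ((X ^ (r - k) - Y) * (X ^ k - 1))) = P
    have h1 := X_pow_sub_Y_ne (r - (T + 1))
    have h2 := X_pow_sub_one_ne (T + 1) (by omega)
    obtain ⟨m, rfl⟩ : ∃ m, r = T + 1 + m := ⟨r - (T + 1), by omega⟩
    have e1 : T + 1 + m - (T + 1) = m := by omega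
    have e2 : T + 1 + m + 1 - (T + 1) = m + 1 := by omega
    have e3 : T + 1 + m - T = m + 1 := by omega
    rw [e1] at h1
    rw [e1, e2, e3, Nat.add_sub_cancel]
    generalize hN : (X ^ T * Y - 1) * (X ^ (m + 1) - 1) = N
    have hD : (X ^ m - Y) * (X ^ (T + 1) - 1) ≠ 0 := mul_ne_zero h1 h2
    have key : (X ^ m - Y) * (X ^ (T + 1) - 1) + (Y - 1) * (X ^ (T + 1 + m) - 1)
        = (X ^ (T + 1) * Y - 1) * (X ^ m - 1) := by ring
    rw [← key]
    generalize (X ^ m - Y) * (X ^ (T + 1) - 1) = D at hD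
    field_simp

/-- For every integer `r ≥ 1`,
`∑_{t=1}^{r} ∏_{k=1}^{t} ((x^{k−1}y − 1)(x^{r+1−k} − 1))/((x^{r−k} − y)(x^{k} − 1)) = −1`
in `K`. -/
theorem sum_prod_identity_neg_one (r : ℕ) (hr : 1 ≤ r) :
    ∑ t ∈ Finset.Icc 1 r, ∏ k ∈ Finset.Icc 1 t,
      ((X ^ (k - 1) * Y - 1) * (X ^ (r + 1 - k) - 1)) /
        ((X ^ (r - k) - Y) * (X ^ k - 1))
      = -1 := by
  have h := partial_sum_aux r r le_rfl
  rw [Nat.sub_self, pow_zero, sub_self, mul_zero, mul_zero] at h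
  have h' := (mul_eq_zero.mp h).resolve_right
    (mul_ne_zero Y_sub_one_ne (X_pow_sub_one_ne r hr))
  exact (neg_eq_of_add_eq_zero_right h').symm
end

section
/- For all integers n ≥ 1, r ≥ 1 and t with 1 ≤ t ≤ r, the identity F_t(x^{n}, r) = (x^{r} − 1)·x^{n−1}·F_{t−1}(x^{n−1}, r−1) + F_t(x^{n−1}, r) holds in ℚ(x). -/
/-- `ℚ(x)`, the field of rational functions in one indeterminate over `ℚ`. -/
noncomputable abbrev Qx : Type := RatFunc ℚ

/-- `F_t(z, r) = ∏_{k=1}^{t} ((z − x^{k−1})(x^{r+1−k} − 1))/(x^{k} − 1)`,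
with the convention `F_0(z, r) = 1` (empty product). -/
noncomputable def F (t : ℕ) (z : Qx) (r : ℕ) : Qx :=
  ∏ k ∈ Finset.Icc 1 t,
    ((z - RatFunc.X ^ (k - 1)) * (RatFunc.X ^ (r + 1 - k) - 1)) / (RatFunc.X ^ k - 1)

theorem F_eq_range (t : ℕ) (z : Qx) (r : ℕ) : F t z r =
    (∏ k ∈ Finset.range t, (z - RatFunc.X ^ k)) *
      (∏ k ∈ Finset.range t, ((RatFunc.X : Qx) ^ (r - k) - 1)) /
      (∏ k ∈ Finset.range t, ((RatFunc.X : Qx) ^ (k + 1) - 1)) := by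
  unfold F
  rw [← Finset.prod_mul_distrib, ← Finset.prod_div_distrib]
  induction t with
  | zero => simp
  | succ t ih =>
    rw [Finset.prod_Icc_succ_top (by omega), ih, Finset.prod_range_succ]
    simp only [Nat.add_sub_cancel, Nat.add_sub_add_right]

theorem X_pow_sub_one_ne_s4 (k : ℕ) : ((RatFunc.X : Qx) ^ (k + 1) - 1) ≠ 0 := by
  have h : (Polynomial.X ^ (k + 1) - 1 : Polynomial ℚ) ≠ 0 := by
    have := Polynomial.X_pow_sub_C_ne_zero (Nat.succ_pos k) (1 : ℚ)
    simpa using this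
  have h2 := RatFunc.algebraMap_ne_zero h
  simpa using h2

theorem P_shift (s : ℕ) (z : Qx) :
    (∏ k ∈ Finset.range (s + 1), (RatFunc.X * z - RatFunc.X ^ k)) =
      (RatFunc.X * z - 1) * (RatFunc.X ^ s * ∏ k ∈ Finset.range s, (z - RatFunc.X ^ k)) := by
  induction s with
  | zero => simp
  | succ s ih => rw [Finset.prod_range_succ, ih, Finset.prod_range_succ _ s]; ring

/-- For all integers `n ≥ 1`, `r ≥ 1` and `1 ≤ t ≤ r`,
`F_t(x^n, r) = (x^r − 1)·x^{n−1}·F_{t−1}(x^{n−1}, r−1) + F_t(x^{n−1}, r)` in `ℚ(x)`. -/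
theorem F_recursion (n r t : ℕ) (hn : 1 ≤ n) (hr : 1 ≤ r) (ht1 : 1 ≤ t) (htr : t ≤ r) :
    F t (RatFunc.X ^ n) r
      = (RatFunc.X ^ r - 1) * RatFunc.X ^ (n - 1) * F (t - 1) (RatFunc.X ^ (n - 1)) (r - 1)
        + F t (RatFunc.X ^ (n - 1)) r := by
  obtain ⟨m, rfl⟩ : ∃ m, n = m + 1 := ⟨n - 1, by omega⟩
  obtain ⟨q, rfl⟩ : ∃ q, r = q + 1 := ⟨r - 1, by omega⟩
  obtain ⟨s, rfl⟩ : ∃ s, t = s + 1 := ⟨t - 1, by omega⟩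
  simp only [Nat.add_sub_cancel]
  rw [F_eq_range, F_eq_range, F_eq_range, pow_succ' _ m, P_shift,
    Finset.prod_range_succ (fun k => (RatFunc.X : Qx) ^ m - RatFunc.X ^ k) s,
    Finset.prod_range_succ' (fun k => (RatFunc.X : Qx) ^ (q + 1 - k) - 1) s,
    Finset.prod_range_succ (fun k => (RatFunc.X : Qx) ^ (k + 1) - 1) s]
  simp only [Nat.add_sub_add_right, Nat.sub_zero]
  have hD : (∏ k ∈ Finset.range s, ((RatFunc.X : Qx) ^ (k + 1) - 1)) ≠ 0 :=
    Finset.prod_ne_zero_iff.mpr fun k _ => X_pow_sub_one_ne_s4 k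
  have hs := X_pow_sub_one_ne_s4 s
  generalize (∏ k ∈ Finset.range s, ((RatFunc.X : Qx) ^ (k + 1) - 1)) = D at *
  generalize (∏ k ∈ Finset.range s, ((RatFunc.X : Qx) ^ (q - k) - 1)) = B
  generalize (∏ k ∈ Finset.range s, ((RatFunc.X : Qx) ^ m - RatFunc.X ^ k)) = P
  rw [div_eq_iff (mul_ne_zero hD hs), add_mul, div_mul_cancel₀ _ (mul_ne_zero hD hs)]
  have : P * B / D * D = P * B := div_mul_cancel₀ _ hD
  linear_combination (-(RatFunc.X ^ (q + 1) - 1) * RatFunc.X ^ m * (RatFunc.X ^ (s + 1) - 1)) * this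
end

section
/- Define, in F = ℚ(u, t), for integers 0 ≤ i ≤ j: m_{ij} = t^{−i} u^{−j(j+1)/2 + (j−i)(j−i+2)/4} (∏_{r=i+1}^{j}(u^{r} − 1)) / (∏_{r=1}^{(j−i)/2}(u^{2r} − 1)) if j − i is even, and m_{ij} = t^{−i} u^{−j(j+1)/2 + ((j−i)^2 − 1)/4} (∏_{r=i+1}^{j}(u^{r} − 1)) / (∏_{r=1}^{(j−i−1)/2}(u^{2r} − 1)) if j − i is odd. Define b_{ij} = 0 for i > j and, for 0 ≤ i ≤ j: b_{ij} = (−1)^{(j−i)/2} t^{j−i} (1 − u^{j+1} t) (∏_{k=i+1}^{j}(u^{k} − 1)) / ((1 − u^{i+1} t) ∏_{k=1}^{(j−i)/2}(1 − u^{2i+1+2k} t^{2})(u^{2k} − 1)) if j − i is even, and b_{ij} = (−1)^{(j−i+1)/2} t^{j−i} (∏_{k=i+1}^{j}(u^{k} − 1)) / ((1 − u^{i+1} t) ∏_{k=1}^{(j−i−1)/2}(1 − u^{2i+1+2k} t^{2})(u^{2k} − 1)) if j − i is odd. Then b_{ii} = 1 for every i ≥ 0, and for all integers 0 ≤ i <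 j one has b_{ij} = (t^{j} u^{j(j+1)/2} / (u^{(j−i)(j+i+1)/2} t^{j−i} − 1)) · ∑_{k=i}^{j−1} m_{kj} b_{ik}. (This says the displayed closed formulas solve the defining recursion of the coefficients b_{χ₀}(s)_{ij} of the U(p)-eigenfunction decomposition of Siegel Eisenstein series for the trivial character, under the substitution u = p, t = p^{−s}.) -/
/-- `F = ℚ(u, t)`, the field of rational functions in two independent
indeterminates over `ℚ`; `u` stands for the odd prime `p` and `t` for `p^{−s}`. -/
noncomputable abbrev Fut : Type := FractionRing (MvPolynomial (Fin 2) ℚ)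

/-- The indeterminate `u` viewed inside `Fut`. -/
noncomputable def U : Fut := algebraMap (MvPolynomial (Fin 2) ℚ) Fut (MvPolynomial.X 0)

/-- The indeterminate `t` viewed inside `Fut`. -/
noncomputable def T : Fut := algebraMap (MvPolynomial (Fin 2) ℚ) Fut (MvPolynomial.X 1)

open Finset in
lemma aux_parity {K : Type*} [Field K] (f : ℕ → K) (N : ℕ) :
    ∑ a ∈ range (2 * N), f a = ∑ a ∈ range N, (f (2 * a) + f (2 * a + 1)) := by
  induction N with
  | zero => simp
  | succ N ih => rw [show 2 * (N + 1) = 2 * N + 1 + 1 by ring, sum_range_succ, sum_range_succ,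
      sum_range_succ, ih]; ring

noncomputable def auxE {K : Type*} [Field K] (Q : K) (n : ℕ) : K :=
  ∏ r ∈ Finset.range n, (Q ^ (r + 1) / (Q ^ (r + 1) - 1))

noncomputable def auxW {K : Type*} [Field K] (Q z : K) (n : ℕ) : K :=
  ∏ r ∈ Finset.range n, (-1 / ((1 - Q ^ (r + 1) * z) * (Q ^ (r + 1) - 1)))

lemma auxE_succ {K : Type*} [Field K] (Q : K) (hQ : ∀ k : ℕ, Q ^ (k + 1) - 1 ≠ 0) (n : ℕ) :
    auxE Q (n + 1) * (Q ^ (n + 1) - 1) = auxE Q n * Q ^ (n + 1) := by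
  have := hQ n
  rw [auxE, Finset.prod_range_succ, ← auxE]
  field_simp

lemma auxW_succ {K : Type*} [Field K] (Q z : K) (hQ : ∀ k : ℕ, Q ^ (k + 1) - 1 ≠ 0)
    (hz : ∀ k : ℕ, 1 - Q ^ (k + 1) * z ≠ 0) (n : ℕ) :
    auxW Q z (n + 1) * ((1 - Q ^ (n + 1) * z) * (Q ^ (n + 1) - 1)) = - auxW Q z n := by
  have := hQ n
  have := hz n
  rw [auxW, Finset.prod_range_succ, ← auxW]
  field_simp

lemma auxW_shift {K : Type*} [Field K] (Q z : K) (hQ : ∀ k : ℕ, Q ^ (k + 1) - 1 ≠ 0)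
    (hz : ∀ k : ℕ, 1 - Q ^ (k + 1) * z ≠ 0) (n : ℕ) :
    auxW Q z (n + 1) * (Q ^ (n + 1) - 1) * (1 - Q * z) = - auxW Q (Q * z) n := by
  induction n with
  | zero =>
    have := hQ 0
    have := hz 0
    simp [auxW] at *
    field_simp
  | succ n ih =>
    have h1 := auxW_succ Q z hQ hz (n + 1)
    have hz' : ∀ k : ℕ, 1 - Q ^ (k + 1) * (Q * z) ≠ 0 := by
      intro k
      have := hz (k + 1)
      rwa [pow_succ, mul_assoc] at this
    have h2 := auxW_succ Q (Q * z) hQ hz' n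
    apply mul_right_cancel₀ (hQ n)
    apply mul_right_cancel₀ (hz (n + 1))
    have e : Q ^ (n + 1) * (Q * z) = Q ^ (n + 1 + 1) * z := by ring
    rw [e] at h2
    linear_combination (1 - Q * z) * (Q ^ (n + 1) - 1) * h1 - ih + h2

open Finset in
lemma aux_I1 {K : Type*} [Field K] (Q : K) (hQ : ∀ k : ℕ, Q ^ (k + 1) - 1 ≠ 0) (N : ℕ) :
    ∀ z : K, (∀ k : ℕ, 1 - Q ^ (k + 1) * z ≠ 0) →
    ∑ p ∈ antidiagonal N, auxE Q p.2 * (Q ^ p.1 * auxW Q z p.1)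
      = (Q ^ N * z) ^ N * (Q ^ N * auxW Q z N) := by
  induction N with
  | zero => intro z hz; simp [auxE, auxW]
  | succ N ih =>
    intro z hz
    have hz' : ∀ k : ℕ, 1 - Q ^ (k + 1) * (Q * z) ≠ 0 := by
      intro k
      have := hz (k + 1)
      rwa [pow_succ, mul_assoc] at this
    have i1 := ih z hz
    have i2 := ih (Q * z) hz'
    have hz0 : 1 - Q * z ≠ 0 := by simpa using hz 0
    apply mul_right_cancel₀ (hQ N)
    apply mul_right_cancel₀ hz0
    have key : (∑ p ∈ antidiagonal (N + 1), auxE Q p.2 * (Q ^ p.1 * auxW Q z p.1))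
        * (Q ^ (N + 1) - 1) =
        (∑ p ∈ antidiagonal (N + 1), auxE Q p.2 * (Q ^ p.1 * auxW Q z p.1) * (Q ^ p.1 - 1)) +
        (∑ p ∈ antidiagonal (N + 1),
          auxE Q p.2 * (Q ^ p.1 * auxW Q z p.1) * (Q ^ p.1 * (Q ^ p.2 - 1))) := by
      rw [← sum_add_distrib, sum_mul]
      refine sum_congr rfl fun p hp => ?_
      rw [← mem_antidiagonal.1 hp]
      ring
    have k1 : (∑ p ∈ antidiagonal (N + 1),
        auxE Q p.2 * (Q ^ p.1 * auxW Q z p.1) * (Q ^ p.1 - 1)) * (1 - Q * z) =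
        -Q * ∑ p ∈ antidiagonal N, auxE Q p.2 * (Q ^ p.1 * auxW Q (Q * z) p.1) := by
      rw [Nat.antidiagonal_succ, sum_cons, sum_map, mul_sum]
      simp only [pow_zero, sub_self, mul_zero, zero_add, sum_mul]
      refine sum_congr rfl fun p hp => ?_
      simp only [Function.Embedding.prodMap, Function.Embedding.coeFn_mk, Prod.map,
        Function.Embedding.refl_apply, Nat.succ_eq_add_one]
      have := auxW_shift Q z hQ hz p.1
      linear_combination auxE Q p.2 * Q ^ (p.1 + 1) * this
    have k2 : (∑ p ∈ antidiagonal (N + 1),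
        auxE Q p.2 * (Q ^ p.1 * auxW Q z p.1) * (Q ^ p.1 * (Q ^ p.2 - 1))) =
        Q ^ (N + 1) * ∑ p ∈ antidiagonal N, auxE Q p.2 * (Q ^ p.1 * auxW Q z p.1) := by
      rw [Nat.antidiagonal_succ', sum_cons, sum_map, mul_sum]
      simp only [pow_zero, sub_self, mul_zero, zero_add]
      refine sum_congr rfl fun p hp => ?_
      simp only [Function.Embedding.prodMap, Function.Embedding.coeFn_mk, Prod.map,
        Function.Embedding.refl_apply, Nat.succ_eq_add_one]
      have := auxE_succ Q hQ p.2
      rw [← mem_antidiagonal.1 hp]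
      linear_combination (Q ^ p.1 * auxW Q z p.1) * Q ^ p.1 * this
    rw [key, add_mul, k1, k2, i1, i2]
    have s1 := auxW_shift Q z hQ hz N
    have s2 := auxW_succ Q z hQ hz N
    clear ih i1 i2 key k1 k2 hz' hz0 hz hQ
    simp only [mul_pow, pow_succ] at *
    generalize Q ^ N = x at *
    linear_combination (-(Q * x ^ N * z ^ N * x ^ 2)) * s1 + (1 - Q * z) * (Q * x ^ N * z ^ N * x ^ 2) * s2

noncomputable def auxc {K : Type*} [Field K] (q y : K) (n : ℕ) : K :=
  if n % 2 = 0 then (1 - q ^ (n + 1) * y) * auxW (q ^ 2) (q * y ^ 2) (n / 2)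
  else - auxW (q ^ 2) (q * y ^ 2) (n / 2)

open Finset in
lemma aux_main {K : Type*} [Field K] (q y : K) (hq0 : q ≠ 0)
    (hQ : ∀ k : ℕ, (q ^ 2) ^ (k + 1) - 1 ≠ 0)
    (hz : ∀ k : ℕ, 1 - (q ^ 2) ^ (k + 1) * (q * y ^ 2) ≠ 0) (n : ℕ) :
    ∑ a ∈ range (n + 1), auxE (q ^ 2) ((n - a) / 2) * auxc q y a
      = q ^ (n * (n + 1) / 2) * y ^ n * auxc q y n := by
  have ev : ∀ a, auxc q y (2 * a) =
      (1 - q ^ (2 * a + 1) * y) * auxW (q ^ 2) (q * y ^ 2) a := by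
    intro a; simp [auxc]
  have od : ∀ a, auxc q y (2 * a + 1) = - auxW (q ^ 2) (q * y ^ 2) a := by
    intro a
    have : (2 * a + 1) / 2 = a := by omega
    simp [auxc, this]
  obtain ⟨N, hN | hN⟩ := Nat.even_or_odd' n
  · subst hN
    have I := aux_I1 (q ^ 2) hQ N _ hz
    rw [Nat.sum_antidiagonal_eq_sum_range_succ_mk] at I
    have hE : (2 * N) * (2 * N + 1) / 2 = N * (2 * N + 1) := by
      rw [mul_assoc]; exact Nat.mul_div_cancel_left _ (by norm_num)
    rw [sum_range_succ, aux_parity, hE]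
    apply mul_left_cancel₀ (pow_ne_zero N (pow_ne_zero 2 hq0))
    rw [mul_add, mul_sum]
    have : ∀ a ∈ range N, (q ^ 2) ^ N * (auxE (q ^ 2) ((2 * N - 2 * a) / 2) * auxc q y (2 * a) +
        auxE (q ^ 2) ((2 * N - (2 * a + 1)) / 2) * auxc q y (2 * a + 1)) =
        (1 - (q ^ 2) ^ N * q * y) *
          (auxE (q ^ 2) (N - a) * ((q ^ 2) ^ a * auxW (q ^ 2) (q * y ^ 2) a)) := by
      intro a ha
      obtain ⟨d, rfl⟩ := Nat.exists_eq_add_of_lt (mem_range.1 ha)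
      rw [show (2 * (a + d + 1) - 2 * a) / 2 = d + 1 by omega,
        show (2 * (a + d + 1) - (2 * a + 1)) / 2 = d by omega,
        show a + d + 1 - a = d + 1 by omega, ev, od]
      have := auxE_succ (q ^ 2) hQ d
      linear_combination auxW (q ^ 2) (q * y ^ 2) a * (q ^ 2) ^ a * this
    rw [sum_congr rfl this, ← mul_sum]
    rw [sum_range_succ] at I
    rw [ev]
    simp only [Nat.sub_self, Nat.zero_div] at I ⊢
    linear_combination (1 - (q ^ 2) ^ N * q * y) * I
  · subst hN
    have I := aux_I1 (q ^ 2) hQ N _ hz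
    rw [Nat.sum_antidiagonal_eq_sum_range_succ_mk] at I
    have hE : (2 * N + 1) * (2 * N + 1 + 1) / 2 = (2 * N + 1) * (N + 1) := by
      rw [show (2 * N + 1) * (2 * N + 1 + 1) = 2 * ((2 * N + 1) * (N + 1)) by ring]
      exact Nat.mul_div_cancel_left _ (by norm_num)
    rw [show 2 * N + 1 + 1 = 2 * (N + 1) by ring, aux_parity,
      show 2 * (N + 1) = 2 * N + 1 + 1 by ring, hE]
    have : ∀ a ∈ range (N + 1), (auxE (q ^ 2) ((2 * N + 1 - 2 * a) / 2) * auxc q y (2 * a) +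
        auxE (q ^ 2) ((2 * N + 1 - (2 * a + 1)) / 2) * auxc q y (2 * a + 1)) =
        (- q * y) *
          (auxE (q ^ 2) (N - a) * ((q ^ 2) ^ a * auxW (q ^ 2) (q * y ^ 2) a)) := by
      intro a ha
      have := mem_range.1 ha
      rw [show (2 * N + 1 - 2 * a) / 2 = N - a by omega,
        show (2 * N + 1 - (2 * a + 1)) / 2 = N - a by omega, ev, od]
      ring
    rw [sum_congr rfl this, ← mul_sum, od]
    linear_combination (- q * y) * I

lemma UT_ne (a b : ℕ) (h : a + b ≠ 0) : U ^ a * T ^ b ≠ 1 := by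
  intro h1
  rw [U, T, ← map_pow, ← map_pow, ← map_mul, ← map_one (algebraMap (MvPolynomial (Fin 2) ℚ) Fut)] at h1
  have h2 := IsFractionRing.injective (MvPolynomial (Fin 2) ℚ) Fut h1
  have h3 := congrArg (MvPolynomial.eval (fun _ => (2 : ℚ))) h2
  simp only [map_mul, map_pow, MvPolynomial.eval_X, map_one, ← pow_add] at h3
  have := one_lt_pow₀ (by norm_num : (1 : ℚ) < 2) h
  linarith

lemma U_ne : U ≠ 0 := by
  rw [U, Ne, map_eq_zero_iff _ (IsFractionRing.injective (MvPolynomial (Fin 2) ℚ) Fut)]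
  exact MvPolynomial.X_ne_zero _

lemma T_ne : T ≠ 0 := by
  rw [T, Ne, map_eq_zero_iff _ (IsFractionRing.injective (MvPolynomial (Fin 2) ℚ) Fut)]
  exact MvPolynomial.X_ne_zero _

lemma auxE_eq (d : ℕ) : auxE (U ^ 2) d =
    U ^ (d * (d + 1)) / ∏ r ∈ Finset.Icc 1 d, (U ^ (2 * r) - 1) := by
  induction d with
  | zero => simp [auxE]
  | succ d ih =>
    rw [auxE, Finset.prod_range_succ, ← auxE, ih, Finset.prod_Icc_succ_top (by omega),
      div_mul_div_comm]
    congr 1 <;> ring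

lemma auxW_eq (i d : ℕ) : auxW (U ^ 2) (U * (U ^ i * T) ^ 2) d =
    (-1) ^ d / ∏ k ∈ Finset.Icc 1 d,
            ((1 - U ^ (2 * i + 1 + 2 * k) * T ^ 2) * (U ^ (2 * k) - 1)) := by
  induction d with
  | zero => simp [auxW]
  | succ d ih =>
    rw [auxW, Finset.prod_range_succ, ← auxW, ih, Finset.prod_Icc_succ_top (by omega),
      div_mul_div_comm]
    congr 1
    ring

/-- The closed formulas for `b_{χ₀}(s)_{ij}` solve the defining recursion of the
coefficients of the `U(p)`-eigenfunction decomposition of Siegel Eisenstein series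
for the trivial character (under `u = p`, `t = p^{−s}`). -/
theorem b_chi0_solves_recursion (m b : ℕ → ℕ → Fut)
    -- m_{ij} for i ≤ j with j − i even
    (hm_even : ∀ i j : ℕ, i ≤ j → (j - i) % 2 = 0 →
      m i j = T ^ (-(i : ℤ)) *
        U ^ ((((j - i) * (j - i + 2) / 4 : ℕ) : ℤ) - ((j * (j + 1) / 2 : ℕ) : ℤ)) *
        (∏ r ∈ Finset.Icc (i + 1) j, (U ^ r - 1)) /
        ∏ r ∈ Finset.Icc 1 ((j - i) / 2), (U ^ (2 * r) - 1))
    -- m_{ij} for i ≤ j with j − i odd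
    (hm_odd : ∀ i j : ℕ, i ≤ j → (j - i) % 2 = 1 →
      m i j = T ^ (-(i : ℤ)) *
        U ^ (((((j - i) ^ 2 - 1) / 4 : ℕ) : ℤ) - ((j * (j + 1) / 2 : ℕ) : ℤ)) *
        (∏ r ∈ Finset.Icc (i + 1) j, (U ^ r - 1)) /
        ∏ r ∈ Finset.Icc 1 ((j - i - 1) / 2), (U ^ (2 * r) - 1))
    -- b_{ij} = 0 for i > j
    (hb_zero : ∀ i j : ℕ, j < i → b i j = 0)
    -- b_{ij} for i ≤ j with j − i even
    (hb_even : ∀ i j : ℕ, i ≤ j → (j - i) % 2 = 0 →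
      b i j = (-1 : Fut) ^ ((j - i) / 2) * T ^ (j - i) * (1 - U ^ (j + 1) * T) *
        (∏ k ∈ Finset.Icc (i + 1) j, (U ^ k - 1)) /
        ((1 - U ^ (i + 1) * T) *
          ∏ k ∈ Finset.Icc 1 ((j - i) / 2),
            ((1 - U ^ (2 * i + 1 + 2 * k) * T ^ 2) * (U ^ (2 * k) - 1))))
    -- b_{ij} for i ≤ j with j − i odd
    (hb_odd : ∀ i j : ℕ, i ≤ j → (j - i) % 2 = 1 →
      b i j = (-1 : Fut) ^ ((j - i + 1) / 2) * T ^ (j - i) *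
        (∏ k ∈ Finset.Icc (i + 1) j, (U ^ k - 1)) /
        ((1 - U ^ (i + 1) * T) *
          ∏ k ∈ Finset.Icc 1 ((j - i - 1) / 2),
            ((1 - U ^ (2 * i + 1 + 2 * k) * T ^ 2) * (U ^ (2 * k) - 1)))) :
    (∀ i : ℕ, b i i = 1) ∧
    (∀ i j : ℕ, i < j →
      b i j = (T ^ j * U ^ (j * (j + 1) / 2) / (U ^ ((j - i) * (j + i + 1) / 2) * T ^ (j - i) - 1)) *
        ∑ k ∈ Finset.Ico i j, m k j * b i k) := by
  have hU := U_ne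
  have hT := T_ne
  have hden : ∀ i : ℕ, 1 - U ^ (i + 1) * T ≠ 0 := by
    intro i h
    have := UT_ne (i + 1) 1 (by omega)
    apply this
    rw [pow_one]
    exact (sub_eq_zero.1 h).symm
  have hm : ∀ k j : ℕ, k ≤ j → m k j * (T ^ k * U ^ (j * (j + 1) / 2)) =
      auxE (U ^ 2) ((j - k) / 2) * ∏ r ∈ Finset.Icc (k + 1) j, (U ^ r - 1) := by
    intro k j hkj
    obtain ⟨d, hd | hd⟩ := Nat.even_or_odd' (j - k)
    · rw [hm_even k j hkj (by omega), hd, auxE_eq, show 2 * d / 2 = d by omega,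
        show 2 * d * (2 * d + 2) / 4 = d * (d + 1) by
          rw [show 2 * d * (2 * d + 2) = 4 * (d * (d + 1)) by ring]
          exact Nat.mul_div_cancel_left _ (by norm_num),
        zpow_sub₀ hU, zpow_neg, zpow_natCast, zpow_natCast, zpow_natCast]
      field_simp
    · rw [hm_odd k j hkj (by omega), hd, auxE_eq, show (2 * d + 1) / 2 = d by omega,
        show (2 * d + 1 - 1) / 2 = d by omega,
        show ((2 * d + 1) ^ 2 - 1) / 4 = d * (d + 1) by
          rw [show (2 * d + 1) ^ 2 = 4 * (d * (d + 1)) + 1 by ring, Nat.add_sub_cancel]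
          exact Nat.mul_div_cancel_left _ (by norm_num),
        zpow_sub₀ hU, zpow_neg, zpow_natCast, zpow_natCast, zpow_natCast]
      field_simp
  have hb : ∀ i a : ℕ, b i (i + a) = T ^ a * auxc U (U ^ i * T) a *
      (∏ r ∈ Finset.Icc (i + 1) (i + a), (U ^ r - 1)) / (1 - U ^ (i + 1) * T) := by
    intro i a
    obtain ⟨d, hd | hd⟩ := Nat.even_or_odd' a
    · rw [hb_even i (i + a) (by omega) (by omega), Nat.add_sub_cancel_left, auxc,
        if_pos (by omega), auxW_eq, hd, show 2 * d / 2 = d by omega]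
      rw [show U ^ (2 * d + 1) * (U ^ i * T) = U ^ (i + 2 * d + 1) * T by ring]
      rw [mul_comm (1 - U ^ (i + 1) * T), ← div_div]
      congr 1
      ring
    · rw [hb_odd i (i + a) (by omega) (by omega), Nat.add_sub_cancel_left, auxc,
        if_neg (by omega), auxW_eq, hd, show (2 * d + 1) / 2 = d by omega,
        show (2 * d + 1 - 1) / 2 = d by omega, show (2 * d + 1 + 1) / 2 = d + 1 by omega]
      rw [mul_comm (1 - U ^ (i + 1) * T), ← div_div]
      congr 1
      ring
  refine ⟨fun i => ?_, fun i j hij => ?_⟩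
  · have := hb i 0
    simp only [add_zero] at this
    rw [this]
    have h := hden i
    simp [auxc, auxW]
    rw [show U * (U ^ i * T) = U ^ (i + 1) * T by ring]
    exact div_self h
  · obtain ⟨n, rfl⟩ := Nat.exists_eq_add_of_le hij.le
    have hn : 0 < n := by omega
    have M := aux_main U (U ^ i * T) hU
      (by
        intro k h
        apply UT_ne (2 * (k + 1)) 0 (by omega)
        rw [pow_zero, mul_one, pow_mul]
        exact sub_eq_zero.1 h)
      (by
        intro k h
        apply UT_ne (2 * (k + 1) + 1 + 2 * i) 2 (by omega)
        linear_combination -h) n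
    rw [Finset.sum_range_succ] at M
    have hX : U ^ ((i + n - i) * (i + n + i + 1) / 2) * T ^ (i + n - i) =
        U ^ (n * (n + 1) / 2) * (U ^ i * T) ^ n := by
      rw [Nat.add_sub_cancel_left, show n * (i + n + i + 1) = n * (n + 1) + (i * n) * 2 by ring,
        Nat.add_mul_div_right _ _ (by norm_num)]
      ring
    have hX1 : U ^ ((i + n - i) * (i + n + i + 1) / 2) * T ^ (i + n - i) - 1 ≠ 0 :=
      sub_ne_zero.2 (UT_ne _ _ (by omega))
    rw [hX] at hX1 ⊢
    rw [div_mul_eq_mul_div, eq_div_iff hX1]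
    rw [Finset.sum_Ico_eq_sum_range, Nat.add_sub_cancel_left, Finset.mul_sum]
    have term : ∀ a ∈ Finset.range n,
        T ^ (i + n) * U ^ ((i + n) * (i + n + 1) / 2) * (m (i + a) (i + n) * b i (i + a)) =
        (T ^ n * (∏ r ∈ Finset.Icc (i + 1) (i + n), (U ^ r - 1)) / (1 - U ^ (i + 1) * T)) *
        (auxE (U ^ 2) ((n - a) / 2) * auxc U (U ^ i * T) a) := by
      intro a ha
      have han := Finset.mem_range.1 ha
      have h1 := hm (i + a) (i + n) (by omega)
      rw [show i + n - (i + a) = n - a by omega] at h1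
      have hP : (∏ r ∈ Finset.Icc (i + 1) (i + a), (U ^ r - 1)) *
          (∏ r ∈ Finset.Icc (i + a + 1) (i + n), (U ^ r - 1)) =
          ∏ r ∈ Finset.Icc (i + 1) (i + n), (U ^ r - 1) := by
        have e : ∀ x y : ℕ, Finset.Icc x y = Finset.Ico x (y + 1) := by
          intro x y; ext; simp
        rw [e, e, e]
        exact Finset.prod_Ico_consecutive _ (by omega) (by omega)
      rw [hb, ← hP]
      obtain ⟨c, rfl⟩ := Nat.exists_eq_add_of_lt han
      rw [mul_div_assoc, mul_div_assoc, mul_div_assoc, div_eq_mul_inv, div_eq_mul_inv]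
      generalize (∏ r ∈ Finset.Icc (i + 1) (i + a), (U ^ r - 1)) = P1 at *
      have e : T ^ (i + (a + c + 1)) = T ^ (i + a) * T ^ (c + 1) := by ring
      have e' : T ^ (a + c + 1) = T ^ a * T ^ (c + 1) := by ring
      rw [e, e']
      linear_combination T ^ (c + 1) * (T ^ a * (auxc U (U ^ i * T) a * (P1 * (1 - U ^ (i + 1) * T)⁻¹))) * h1
    rw [Finset.sum_congr rfl term, ← Finset.mul_sum, hb]
    have e0 : auxE (U ^ 2) ((n - n) / 2) = 1 := by simp [auxE]
    rw [e0] at M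
    rw [div_eq_mul_inv, div_eq_mul_inv]
    linear_combination (-(T ^ n * (∏ r ∈ Finset.Icc (i + 1) (i + n), (U ^ r - 1)) * (1 - U ^ (i + 1) * T)⁻¹)) * M
end

section
/- Fix ε ∈ {1, −1}. Define, in F = ℚ(u, t), for integers 0 ≤ i ≤ j: m_{ij} = ε^{(j−i)/2} t^{−i} u^{−j(j+1)/2 + (j−i)^2/4} (∏_{k=i+1}^{j}(u^{k} − 1)) / (∏_{k=1}^{(j−i)/2}(u^{2k} − 1)) if j − i is even, and m_{ij} = 0 if j − i is odd. Define b_{ij} = (−ε)^{(j−i)/2} u^{(j−i)/2} t^{j−i} (∏_{k=i+1}^{j}(u^{k} − 1)) / (∏_{k=1}^{(j−i)/2}(1 − u^{2i+1+2k} t^{2})(u^{2k} − 1)) when 0 ≤ i ≤ j and j − i is even, and b_{ij} = 0 otherwise (in particular when i > j or j − i is odd). Then b_{ii} = 1 for every i ≥ 0, and for all integers 0 ≤ i < j one has b_{ij} = (t^{j} u^{j(j+1)/2} / (u^{(j−i)(j+i+1)/2} t^{j−i} − 1)) · ∑_{k=i}^{j−1} m_{kj} b_{ik}. (This says the displayed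 closed formulas solve the defining recursion of the coefficients b_{χ_p}(s)_{ij} of the U(p)-eigenfunction decomposition of Siegel Eisenstein series for the quadratic character, under the substitution u = p, t = p^{−s}, ε = χ_p(−1).) -/
noncomputable def Qf {K : Type*} [Field K] (q : K) (n : ℕ) : K :=
  ∏ k ∈ Finset.range n, (q ^ (k + 1) - 1)

noncomputable def Ef {K : Type*} [Field K] (q x : K) (l d : ℕ) : K :=
  ∏ k ∈ Finset.range d, (1 - x * q ^ (l + 1 + k))

noncomputable def ff {K : Type*} [Field K] (q x : K) (l d : ℕ) : K :=
  (-1) ^ l * q ^ (d.choose 2) / (Qf q l * Qf q d) * Ef q x l d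

lemma Qf_succ {K : Type*} [Field K] (q : K) (n : ℕ) :
    Qf q (n + 1) = Qf q n * (q ^ (n + 1) - 1) := Finset.prod_range_succ _ _

lemma Ef_succ {K : Type*} [Field K] (q x : K) (l d : ℕ) :
    Ef q x l (d + 1) = Ef q (x * q) l d * (1 - x * q ^ (l + 1)) := by
  unfold Ef
  rw [Finset.prod_range_succ']
  congr 1
  apply Finset.prod_congr rfl
  intro k _
  ring

lemma Ef_shift {K : Type*} [Field K] (q x : K) (l d : ℕ) :
    Ef q x (l + 1) d = Ef q (x * q) l d := by
  unfold Ef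
  apply Finset.prod_congr rfl
  intro k _
  ring

lemma Ef_add {K : Type*} [Field K] (q x : K) (l d : ℕ) :
    Ef q x 0 (l + d) = Ef q x 0 l * Ef q x l d := by
  unfold Ef
  rw [Finset.prod_range_add]
  congr 1
  apply Finset.prod_congr rfl
  intro k _
  ring

lemma Qf_ne {K : Type*} [Field K] (q : K) (hq : ∀ n : ℕ, q ^ (n + 1) - 1 ≠ 0) (n : ℕ) :
    Qf q n ≠ 0 := Finset.prod_ne_zero_iff.2 fun k _ => hq k

lemma sum_ff {K : Type*} [Field K] (q : K) (hq : ∀ n : ℕ, q ^ (n + 1) - 1 ≠ 0) (n : ℕ) :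
    ∀ x : K, ∑ p ∈ Finset.HasAntidiagonal.antidiagonal n, ff q x p.1 p.2 = (-x) ^ n * q ^ (n ^ 2) / Qf q n := by
  induction n with
  | zero => intro x; simp [ff, Qf, Ef]
  | succ n ih =>
    intro x
    have key : (q ^ (n + 1) - 1) * ∑ p ∈ Finset.HasAntidiagonal.antidiagonal (n + 1), ff q x p.1 p.2
        = -x * q ^ (n + 1) * ∑ p ∈ Finset.HasAntidiagonal.antidiagonal n, ff q (x * q) p.1 p.2 := by
      have h1 : (q ^ (n + 1) - 1) * ∑ p ∈ Finset.HasAntidiagonal.antidiagonal (n + 1), ff q x p.1 p.2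
        = ∑ p ∈ Finset.HasAntidiagonal.antidiagonal (n + 1), (q ^ p.2 - 1) * ff q x p.1 p.2
        + ∑ p ∈ Finset.HasAntidiagonal.antidiagonal (n + 1), q ^ p.2 * (q ^ p.1 - 1) * ff q x p.1 p.2 := by
        rw [Finset.mul_sum, ← Finset.sum_add_distrib]
        apply Finset.sum_congr rfl
        intro p hp
        rw [← Finset.HasAntidiagonal.mem_antidiagonal.1 hp]
        ring
      rw [h1, Finset.Nat.sum_antidiagonal_succ', Finset.Nat.sum_antidiagonal_succ]
      simp only [pow_zero, sub_self, zero_mul, mul_zero, add_zero, zero_add]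
      rw [← Finset.sum_add_distrib, Finset.mul_sum]
      apply Finset.sum_congr rfl
      rintro ⟨l, d⟩ hp
      have hn := Finset.HasAntidiagonal.mem_antidiagonal.1 hp
      simp only at hn ⊢
      subst hn
      unfold ff
      rw [Ef_succ, Ef_shift, Qf_succ, Qf_succ, Nat.choose_succ_succ' d 1, Nat.choose_one_right]
      have a := Qf_ne q hq l
      have b := Qf_ne q hq d
      have c := hq l
      have e := hq d
      generalize hl : q ^ (l + 1) - 1 = X at *
      generalize hd : q ^ (d + 1) - 1 = Y at *
      field_simp
      ring
    rw [ih] at key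
    rw [Qf_succ, eq_div_iff (mul_ne_zero (Qf_ne q hq n) (hq n))]
    have a := Qf_ne q hq n
    calc _ = ((q ^ (n + 1) - 1) * ∑ p ∈ Finset.HasAntidiagonal.antidiagonal (n + 1), ff q x p.1 p.2) * Qf q n := by
            ring
      _ = _ := by
            rw [key, mul_assoc, div_mul_cancel₀ _ a]
            ring

lemma sum_step {K : Type*} [Field K] (g : ℕ → K) (i n : ℕ) (h : ∀ l, g (i + 2 * l + 1) = 0) :
    ∑ k ∈ Finset.Ico i (i + 2 * n), g k = ∑ l ∈ Finset.range n, g (i + 2 * l) := by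
  induction n with
  | zero => simp
  | succ n ih =>
    rw [Finset.sum_range_succ, ← ih, show i + 2 * (n + 1) = i + 2 * n + 1 + 1 by ring,
      Finset.sum_Ico_succ_top (by omega), Finset.sum_Ico_succ_top (by omega), h, add_zero]

lemma prod_Icc_one {K : Type*} [Field K] (g : ℕ → K) (n : ℕ) :
    ∏ k ∈ Finset.Icc 1 n, g k = ∏ k ∈ Finset.range n, g (k + 1) := by
  induction n with
  | zero => simp
  | succ n ih => rw [Finset.prod_Icc_succ_top (by omega), Finset.prod_range_succ, ih]

lemma prod_Icc_split {K : Type*} [Field K] (g : ℕ → K) (i a c : ℕ) :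
    (∏ k ∈ Finset.Icc (i + 1) (i + a), g k) * ∏ k ∈ Finset.Icc (i + a + 1) (i + a + c), g k
      = ∏ k ∈ Finset.Icc (i + 1) (i + a + c), g k := by
  induction c with
  | zero => simp
  | succ n ih =>
    rw [← add_assoc, Finset.prod_Icc_succ_top (by omega), Finset.prod_Icc_succ_top (by omega), ← ih,
      mul_assoc]

/-- The closed formulas for `b_{χ_p}(s)_{ij}` solve the defining recursion of the
coefficients of the `U(p)`-eigenfunction decomposition of Siegel Eisenstein series
for the quadratic character (under `u = p`, `t = p^{−s}`, `ε = χ_p(−1)`). -/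
theorem b_chip_solves_recursion (ε : Fut) (hε : ε = 1 ∨ ε = -1) (m b : ℕ → ℕ → Fut)
    -- m_{ij} for i ≤ j with j − i even
    (hm_even : ∀ i j : ℕ, i ≤ j → (j - i) % 2 = 0 →
      m i j = ε ^ ((j - i) / 2) * T ^ (-(i : ℤ)) *
        U ^ ((((j - i) ^ 2 / 4 : ℕ) : ℤ) - ((j * (j + 1) / 2 : ℕ) : ℤ)) *
        (∏ k ∈ Finset.Icc (i + 1) j, (U ^ k - 1)) /
        ∏ k ∈ Finset.Icc 1 ((j - i) / 2), (U ^ (2 * k) - 1))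
    -- m_{ij} = 0 for i ≤ j with j − i odd
    (hm_odd : ∀ i j : ℕ, i ≤ j → (j - i) % 2 = 1 → m i j = 0)
    -- b_{ij} for 0 ≤ i ≤ j with j − i even
    (hb_even : ∀ i j : ℕ, i ≤ j → (j - i) % 2 = 0 →
      b i j = (-ε) ^ ((j - i) / 2) * U ^ ((j - i) / 2) * T ^ (j - i) *
        (∏ k ∈ Finset.Icc (i + 1) j, (U ^ k - 1)) /
        ∏ k ∈ Finset.Icc 1 ((j - i) / 2),
          ((1 - U ^ (2 * i + 1 + 2 * k) * T ^ 2) * (U ^ (2 * k) - 1)))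
    -- b_{ij} = 0 otherwise (i > j, or j − i odd)
    (hb_zero : ∀ i j : ℕ, ¬(i ≤ j ∧ (j - i) % 2 = 0) → b i j = 0) :
    (∀ i : ℕ, b i i = 1) ∧
    (∀ i j : ℕ, i < j →
      b i j = (T ^ j * U ^ (j * (j + 1) / 2) / (U ^ ((j - i) * (j + i + 1) / 2) * T ^ (j - i) - 1)) *
        ∑ k ∈ Finset.Ico i j, m k j * b i k) := by
  have hU : U ≠ 0 := by
    simp [U]
  have hT : T ≠ 0 := by
    simp [T]
  have hq : ∀ n : ℕ, (U ^ 2) ^ (n + 1) - 1 ≠ 0 := by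
    intro n
    have := UT_ne (2 * (n + 1)) 0 (by omega)
    rw [pow_zero, mul_one, pow_mul] at this
    exact sub_ne_zero.2 this
  have hQ : ∀ n : ℕ, ∏ k ∈ Finset.Icc 1 n, (U ^ (2 * k) - 1) = Qf (U ^ 2) n := by
    intro n
    rw [prod_Icc_one]
    simp only [Qf, pow_mul]
  have hE : ∀ i n : ℕ, ∏ k ∈ Finset.Icc 1 n, (1 - U ^ (2 * i + 1 + 2 * k) * T ^ 2)
      = Ef (U ^ 2) (U ^ (2 * i + 1) * T ^ 2) 0 n := by
    intro i n
    rw [prod_Icc_one]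
    unfold Ef
    apply Finset.prod_congr rfl
    intro k _
    ring
  have hEne : ∀ i n : ℕ, Ef (U ^ 2) (U ^ (2 * i + 1) * T ^ 2) 0 n ≠ 0 := by
    intro i n
    rw [← hE]
    exact Finset.prod_ne_zero_iff.2 fun k _ => sub_ne_zero.2 (UT_ne _ _ (by omega)).symm
  have hb : ∀ i n : ℕ, b i (i + 2 * n) = (-ε) ^ n * U ^ n * T ^ (2 * n) *
      (∏ k ∈ Finset.Icc (i + 1) (i + 2 * n), (U ^ k - 1)) /
      (Ef (U ^ 2) (U ^ (2 * i + 1) * T ^ 2) 0 n * Qf (U ^ 2) n) := by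
    intro i n
    rw [hb_even _ _ (by omega) (by omega), Finset.prod_mul_distrib,
      show (i + 2 * n - i) / 2 = n by omega, show i + 2 * n - i = 2 * n by omega, hQ, hE]
  have hm : ∀ i d : ℕ, m i (i + 2 * d) * (T ^ i * U ^ ((i + 2 * d) * (i + 2 * d + 1) / 2))
      = ε ^ d * U ^ (d ^ 2) *
      (∏ k ∈ Finset.Icc (i + 1) (i + 2 * d), (U ^ k - 1)) / Qf (U ^ 2) d := by
    intro i d
    rw [hm_even _ _ (by omega) (by omega),
      show (i + 2 * d - i) / 2 = d by omega, show i + 2 * d - i = 2 * d by omega, hQ,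
      show (2 * d) ^ 2 / 4 = d ^ 2 by rw [mul_pow]; omega, zpow_sub₀ hU, zpow_neg,
      zpow_natCast, zpow_natCast, zpow_natCast]
    have := Qf_ne _ hq d
    field_simp
  refine ⟨fun i => ?_, fun i j hij => ?_⟩
  · have := hb i 0
    simpa [Ef, Qf] using this
  rcases Nat.even_or_odd (j - i) with ⟨n, hn⟩ | ⟨n, hn⟩
  · obtain rfl : j = i + 2 * n := by omega
    rw [sum_step]
    swap
    · intro l
      rw [hb_zero i (i + 2 * l + 1) (by omega), mul_zero]
    set x := U ^ (2 * i + 1) * T ^ 2 with hx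
    set P := ∏ k ∈ Finset.Icc (i + 1) (i + 2 * n), (U ^ k - 1) with hP
    have hden : U ^ ((i + 2 * n - i) * (i + 2 * n + i + 1) / 2) * T ^ (i + 2 * n - i)
        = x ^ n * (U ^ 2) ^ (n ^ 2) := by
      rw [show i + 2 * n - i = 2 * n by omega, mul_assoc, Nat.mul_div_cancel_left _ (by norm_num), hx]
      ring
    have hne : x ^ n * (U ^ 2) ^ (n ^ 2) - 1 ≠ 0 := by
      rw [← hden]
      exact sub_ne_zero.2 (UT_ne _ _ (by omega))
    have hterm : ∀ l ∈ Finset.range n,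
        (T ^ (i + 2 * n) * U ^ ((i + 2 * n) * (i + 2 * n + 1) / 2)) *
          (m (i + 2 * l) (i + 2 * n) * b i (i + 2 * l))
        = ε ^ n * T ^ (2 * n) * U ^ n * P / Ef (U ^ 2) x 0 n * ff (U ^ 2) x l (n - l) := by
      intro l hl
      obtain ⟨d, rfl⟩ := Nat.exists_eq_add_of_le (Finset.mem_range.1 hl).le
      have h1 := hm (i + 2 * l) d
      rw [show i + 2 * l + 2 * d = i + 2 * (l + d) by ring] at h1
      have h2 := prod_Icc_split (fun k => U ^ k - 1) i (2 * l) (2 * d)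
      rw [show i + 2 * l + 2 * d = i + 2 * (l + d) by ring] at h2
      rw [hP, ← h2, add_tsub_cancel_left]
      have h3 : T ^ (i + 2 * (l + d)) = T ^ (i + 2 * l) * T ^ (2 * d) := by ring
      rw [h3]
      calc _ = (m (i + 2 * l) (i + 2 * (l + d)) * (T ^ (i + 2 * l) *
            U ^ ((i + 2 * (l + d)) * (i + 2 * (l + d) + 1) / 2))) *
            (T ^ (2 * d) * b i (i + 2 * l)) := by ring
        _ = _ := ?_
      rw [h1, hb, ← hx, Ef_add]
      have hd : d ^ 2 = d + 2 * d.choose 2 := by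
        have := Nat.triangle_succ d
        rw [Nat.choose_two_right, Nat.mul_div_cancel' (Nat.even_mul_pred_self d).two_dvd]
        cases d <;> simp; ring
      rw [hd]
      have e1 := hEne i l
      have e2 := hEne i (l + d)
      rw [← hx] at e1 e2
      rw [Ef_add] at e2
      have e3 := right_ne_zero_of_mul e2
      have e4 := Qf_ne _ hq l
      have e5 := Qf_ne _ hq d
      unfold ff
      rw [neg_pow]
      field_simp
      ring
    have hs := sum_ff (U ^ 2) hq n x
    rw [Finset.Nat.sum_antidiagonal_eq_sum_range_succ (fun a b => ff (U ^ 2) x a b) n,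
      Finset.sum_range_succ, ← eq_sub_iff_add_eq] at hs
    rw [div_mul_eq_mul_div, Finset.mul_sum, Finset.sum_congr rfl hterm, ← Finset.mul_sum, hs, hden,
      hb, ← hx, ← hP, eq_div_iff hne]
    have e1 := hEne i n
    rw [← hx] at e1
    have e4 := Qf_ne _ hq n
    have hf : ff (U ^ 2) x n (n - n) = (-1) ^ n / Qf (U ^ 2) n := by
      simp [ff, Ef, Qf]
    rw [hf, neg_pow x, neg_pow ε]
    field_simp
  · rw [hb_zero i j (by omega), Finset.sum_eq_zero, mul_zero]
    intro k hk
    rw [Finset.mem_Ico] at hk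
    by_cases h : (k - i) % 2 = 0
    · rw [hm_odd k j (by omega) (by omega), zero_mul]
    · rw [hb_zero i k (by omega), mul_zero]
end

section
/- Define, in F = ℚ(u, t), for 0 ≤ i ≤ j: c_{ij} = u^{(j−i)(j−i+2)/4} t^{j−i} (1 − u^{i} t) (∏_{k=i+1}^{j}(u^{k} − 1)) / ((1 − u^{j} t) ∏_{k=1}^{(j−i)/2}(1 − u^{i+j−1+2k} t^{2})(u^{2k} − 1)) if i ≡ j (mod 2), and c_{ij} = u^{((j−i)^2 − 1)/4} t^{j−i} (∏_{k=i+1}^{j}(u^{k} − 1)) / ((1 − u^{j} t) ∏_{k=1}^{(j−i−1)/2}(1 − u^{i+j+2k} t^{2})(u^{2k} − 1)) if i ≢ j (mod 2); set c_{ij} = 0 for i > j. Then for every integer n ≥ 0, the (n+1)×(n+1) matrices B = (b_{ij})_{0 ≤ i,j ≤ n} and C = (c_{ij})_{0 ≤ i,j ≤ n} satisfy B·C = I_{n+1}; equivalently, ∑_{k=i}^{j} b_{ik} c_{kj} equals 1 if i = j and equals 0 if i < j. (This is the explicit inverse of the change-of-basis matrix between the Eisenstein series attached to the cusps w_ν and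 the U(p)-eigenfunctions, for the trivial character.) -/
lemma one_sub_ne (a k : ℕ) : (1 - U ^ a * T ^ (k+1) : Fut) ≠ 0 := by
  intro h
  have h2 : algebraMap (MvPolynomial (Fin 2) ℚ) Fut
      (1 - MvPolynomial.X 0 ^ a * MvPolynomial.X 1 ^ (k+1)) = 0 := by
    rw [← h]; simp [U, T]
  rw [map_eq_zero_iff _ (IsFractionRing.injective (MvPolynomial (Fin 2) ℚ) Fut)] at h2
  have h3 := congrArg (MvPolynomial.eval (fun _ => (0:ℚ)) ∘ fun p => p) h2
  have h4 := congrArg (MvPolynomial.eval (fun i : Fin 2 => if i = 0 then (1:ℚ) else 0)) h2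
  simp at h4

lemma one_sub_ne1 (a : ℕ) : (1 - U ^ a * T : Fut) ≠ 0 := by
  simpa using one_sub_ne a 0

lemma one_sub_ne2 (a : ℕ) : (1 - U ^ a * T ^ 2 : Fut) ≠ 0 := one_sub_ne a 1

lemma U_pow_ne (a : ℕ) : (U ^ (a + 1) - 1 : Fut) ≠ 0 := by
  intro h
  have h2 : algebraMap (MvPolynomial (Fin 2) ℚ) Fut
      (MvPolynomial.X 0 ^ (a+1) - 1) = 0 := by
    rw [← h]; simp [U]
  rw [map_eq_zero_iff _ (IsFractionRing.injective (MvPolynomial (Fin 2) ℚ) Fut)] at h2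
  have h4 := congrArg (MvPolynomial.eval (fun _ : Fin 2 => (0:ℚ))) h2
  simp at h4

noncomputable def pA (e s : ℕ) : Fut := ∏ l ∈ Finset.range s, (1 - U ^ (e + 2 * l) * T ^ 2)
noncomputable def pD (s : ℕ) : Fut := ∏ l ∈ Finset.range s, (U ^ (2 * (l + 1)) - 1)
noncomputable def pN (i j : ℕ) : Fut := ∏ k ∈ Finset.Icc (i + 1) j, (U ^ k - 1)

lemma pA_ne (e s : ℕ) : pA e s ≠ 0 := Finset.prod_ne_zero_iff.2 fun _ _ => one_sub_ne2 _
lemma pD_ne (s : ℕ) : pD s ≠ 0 := Finset.prod_ne_zero_iff.2 fun l _ => U_pow_ne (2 * l + 1)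

lemma pA_succ (e s : ℕ) : pA e (s + 1) = pA e s * (1 - U ^ (e + 2 * s) * T ^ 2) := by
  simp [pA, Finset.prod_range_succ]
lemma pA_succ' (e s : ℕ) : pA e (s + 1) = (1 - U ^ e * T ^ 2) * pA (e + 2) s := by
  rw [pA, Finset.prod_range_succ', mul_comm, pA]
  congr 1
  refine Finset.prod_congr rfl fun l _ => ?_
  rw [show e + 2 * (l + 1) = e + 2 + 2 * l by ring]
lemma pD_succ (s : ℕ) : pD (s + 1) = pD s * (U ^ (2 * (s + 1)) - 1) := by
  simp [pD, Finset.prod_range_succ]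

lemma pN_mul (i j k : ℕ) (h : i ≤ j) (h' : j ≤ k) : pN i j * pN j k = pN i k := by
  have key : ∀ a b : ℕ, Finset.Icc (a + 1) b = Finset.Ioc a b := by
    intro a b; ext x; simp only [Finset.mem_Icc, Finset.mem_Ioc]; omega
  simp only [pN, key]
  exact Finset.prod_Ioc_consecutive _ h h'

lemma prod_conv (e s : ℕ) :
    ∏ k ∈ Finset.Icc 1 s, ((1 - U ^ (e + 2 * k) * T ^ 2) * (U ^ (2 * k) - 1))
      = pA (e + 2) s * pD s := by
  induction s with
  | zero => simp [pA, pD]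
  | succ s ih =>
    rw [Finset.prod_Icc_succ_top (by omega), ih, pA_succ, pD_succ,
      show e + 2 + 2 * s = e + 2 * (s + 1) by ring]
    ring

noncomputable def pf (i r s : ℕ) : Fut :=
  (-1) ^ r * U ^ (s * (s - 1)) /
    (pA (2 * i + 3) r * pD r * (pA (2 * i + 4 * r + 2 * s + 1) s * pD s))

lemma pf_step (i r s : ℕ) :
    pf i (r + 1) s * ((1 - U ^ (2 * i + 3 + 2 * r) * T ^ 2) * (U ^ (2 * (r + 1)) - 1)) * U ^ (2 * s)
      = - (pf i r (s + 1) * (U ^ (2 * (s + 1)) - 1)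
          * (1 - U ^ (2 * i + 4 * r + 2 * s + 3) * T ^ 2)) := by
  have e1 : (s + 1) * (s + 1 - 1) = s * (s - 1) + 2 * s := by
    cases s with
    | zero => rfl
    | succ n => simp; ring
  unfold pf
  rw [e1, pA_succ (2 * i + 3) r, pD_succ r, pD_succ s, pA_succ',
    show 2 * i + 4 * (r + 1) + 2 * s + 1 = 2 * i + 4 * r + 2 * s + 5 by ring,
    show 2 * i + 4 * r + 2 * (s + 1) + 1 = 2 * i + 4 * r + 2 * s + 3 by ring,
    show 2 * i + 4 * r + 2 * s + 3 + 2 = 2 * i + 4 * r + 2 * s + 5 by ring]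
  have h1 := pA_ne (2 * i + 3) r
  have h2 := pD_ne r
  have h3 := pD_ne s
  have h4 := pA_ne (2 * i + 4 * r + 2 * s + 5) s
  have h5 := one_sub_ne2 (2 * i + 3 + 2 * r)
  have h6 : (U ^ (2 * (r + 1)) - 1 : Fut) ≠ 0 := U_pow_ne (2 * r + 1)
  have h7 : (U ^ (2 * (s + 1)) - 1 : Fut) ≠ 0 := U_pow_ne (2 * s + 1)
  have h8 := one_sub_ne2 (2 * i + 4 * r + 2 * s + 3)
  rw [pow_add U (s * (s - 1)) (2 * s), pow_succ (-1 : Fut)]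
  generalize (1 - U ^ (2 * i + 3 + 2 * r) * T ^ 2 : Fut) = x5 at *
  generalize (U ^ (2 * (r + 1)) - 1 : Fut) = x6 at *
  generalize (U ^ (2 * (s + 1)) - 1 : Fut) = x7 at *
  generalize (1 - U ^ (2 * i + 4 * r + 2 * s + 3) * T ^ 2 : Fut) = x8 at *
  generalize pA (2 * i + 3) r = x1 at *
  generalize pD r = x2 at *
  generalize pD s = x3 at *
  generalize pA (2 * i + 4 * r + 2 * s + 5) s = x4 at *
  generalize U ^ (s * (s - 1)) = y1
  generalize U ^ (2 * s) = y2
  generalize (-1 : Fut) ^ r = y3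
  field_simp

lemma telescope (i m R S : ℕ) (h : R + S = m) :
    (U ^ (2 * m) - 1) * (1 - U ^ (2 * i + 1 + 2 * m) * T ^ 2) *
      ∑ r ∈ Finset.range (R + 1), pf i r (m - r)
      = pf i R S * (U ^ (2 * S) - 1) * (1 - U ^ (2 * i + 1 + 2 * R + 2 * m) * T ^ 2) := by
  induction R generalizing S with
  | zero =>
    obtain rfl : S = m := by omega
    simp; ring
  | succ R ih =>
    rw [Finset.sum_range_succ, mul_add, ih (S + 1) (by omega)]
    have st := pf_step i R S
    subst h
    rw [show R + 1 + S - (R + 1) = S by omega]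
    rw [show 2 * i + 1 + 2 * R + 2 * (R + 1 + S) = 2 * i + 4 * R + 2 * S + 3 by ring]
    have st2 := congrArg Neg.neg st
    rw [neg_neg] at st2
    rw [← st2]
    ring

lemma sum_pf (i m : ℕ) (hm : 0 < m) : ∑ r ∈ Finset.range (m + 1), pf i r (m - r) = 0 := by
  have := telescope i m m 0 rfl
  simp only [mul_zero, pow_zero, sub_self, zero_mul] at this
  obtain ⟨n, rfl⟩ : ∃ n, m = n + 1 := ⟨m - 1, by omega⟩
  have h1 : (U ^ (2 * (n + 1)) - 1 : Fut) ≠ 0 := U_pow_ne (2 * n + 1)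
  exact (mul_eq_zero.1 this).resolve_left (mul_ne_zero h1 (one_sub_ne2 _))

lemma sum_pair (g : ℕ → Fut) (n : ℕ) :
    ∑ k ∈ Finset.range (2 * n), g k = ∑ r ∈ Finset.range n, (g (2 * r) + g (2 * r + 1)) := by
  induction n with
  | zero => simp
  | succ n ih =>
    rw [show 2 * (n + 1) = 2 * n + 1 + 1 by ring, Finset.sum_range_succ, Finset.sum_range_succ, ih,
      Finset.sum_range_succ]
    ring

set_option maxHeartbeats 4000000 in
/-- The matrix `C = (c_{ij})` of the displayed closed formulas is the inverse of the
change-of-basis matrix `B = (b_{ij})` between the Eisenstein series attached to the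
cusps `w_ν` and the `U(p)`-eigenfunctions, for the trivial character. -/
theorem c_chi0_inverse (b c : ℕ → ℕ → Fut)
    -- b_{ij} = 0 for i > j
    (hb_zero : ∀ i j : ℕ, j < i → b i j = 0)
    -- b_{ij} for i ≤ j with j − i even
    (hb_even : ∀ i j : ℕ, i ≤ j → (j - i) % 2 = 0 →
      b i j = (-1 : Fut) ^ ((j - i) / 2) * T ^ (j - i) * (1 - U ^ (j + 1) * T) *
        (∏ k ∈ Finset.Icc (i + 1) j, (U ^ k - 1)) /
        ((1 - U ^ (i + 1) * T) *
          ∏ k ∈ Finset.Icc 1 ((j - i) / 2),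
            ((1 - U ^ (2 * i + 1 + 2 * k) * T ^ 2) * (U ^ (2 * k) - 1))))
    -- b_{ij} for i ≤ j with j − i odd
    (hb_odd : ∀ i j : ℕ, i ≤ j → (j - i) % 2 = 1 →
      b i j = (-1 : Fut) ^ ((j - i + 1) / 2) * T ^ (j - i) *
        (∏ k ∈ Finset.Icc (i + 1) j, (U ^ k - 1)) /
        ((1 - U ^ (i + 1) * T) *
          ∏ k ∈ Finset.Icc 1 ((j - i - 1) / 2),
            ((1 - U ^ (2 * i + 1 + 2 * k) * T ^ 2) * (U ^ (2 * k) - 1))))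
    -- c_{ij} = 0 for i > j
    (hc_zero : ∀ i j : ℕ, j < i → c i j = 0)
    -- c_{ij} for i ≤ j with i ≡ j (mod 2)
    (hc_even : ∀ i j : ℕ, i ≤ j → (j - i) % 2 = 0 →
      c i j = U ^ ((j - i) * (j - i + 2) / 4) * T ^ (j - i) * (1 - U ^ i * T) *
        (∏ k ∈ Finset.Icc (i + 1) j, (U ^ k - 1)) /
        ((1 - U ^ j * T) *
          ∏ k ∈ Finset.Icc 1 ((j - i) / 2),
            ((1 - U ^ (i + j - 1 + 2 * k) * T ^ 2) * (U ^ (2 * k) - 1))))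
    -- c_{ij} for i ≤ j with i ≢ j (mod 2)
    (hc_odd : ∀ i j : ℕ, i ≤ j → (j - i) % 2 = 1 →
      c i j = U ^ (((j - i) ^ 2 - 1) / 4) * T ^ (j - i) *
        (∏ k ∈ Finset.Icc (i + 1) j, (U ^ k - 1)) /
        ((1 - U ^ j * T) *
          ∏ k ∈ Finset.Icc 1 ((j - i - 1) / 2),
            ((1 - U ^ (i + j + 2 * k) * T ^ 2) * (U ^ (2 * k) - 1)))) :
    ∀ n : ℕ,
      (Matrix.of fun i j : Fin (n + 1) => b i j) * (Matrix.of fun i j : Fin (n + 1) => c i j)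
        = 1 := by
  have bE : ∀ i r, b i (i + 2 * r) = (-1) ^ r * T ^ (2 * r) * (1 - U ^ (i + 2 * r + 1) * T) *
      pN i (i + 2 * r) / ((1 - U ^ (i + 1) * T) * (pA (2 * i + 3) r * pD r)) := by
    intro i r
    rw [hb_even i _ (by omega) (by omega), prod_conv, show i + 2 * r - i = 2 * r by omega,
      show 2 * r / 2 = r by omega]
    rfl
  have bO : ∀ i r, b i (i + 2 * r + 1) = (-1) ^ (r + 1) * T ^ (2 * r + 1) *
      pN i (i + 2 * r + 1) / ((1 - U ^ (i + 1) * T) * (pA (2 * i + 3) r * pD r)) := by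
    intro i r
    rw [hb_odd i _ (by omega) (by omega), prod_conv, show i + 2 * r + 1 - i = 2 * r + 1 by omega,
      show (2 * r + 1 - 1) / 2 = r by omega, show (2 * r + 1 + 1) / 2 = r + 1 by omega]
    rfl
  have cE : ∀ i s, c i (i + 2 * s) = U ^ (s * (s - 1) + 2 * s) * T ^ (2 * s) * (1 - U ^ i * T) *
      pN i (i + 2 * s) / ((1 - U ^ (i + 2 * s) * T) * (pA (2 * i + 2 * s + 1) s * pD s)) := by
    intro i s
    have e1 : (2 * s) * (2 * s + 2) / 4 = s * (s - 1) + 2 * s := by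
      rw [show (2 * s) * (2 * s + 2) = (s * (s + 1)) * 4 by ring, Nat.mul_div_cancel _ (by norm_num)]
      cases s with
      | zero => rfl
      | succ n => simp; ring
    rw [hc_even i _ (by omega) (by omega), prod_conv, show i + 2 * s - i = 2 * s by omega,
      show 2 * s / 2 = s by omega, e1]
    cases s with
    | zero => simp [pA, pN]
    | succ n =>
      rw [show i + (i + 2 * (n + 1)) - 1 + 2 = 2 * i + 2 * (n + 1) + 1 by omega]
      rfl
  have cO : ∀ i s, c i (i + 2 * s + 1) = U ^ (s * (s - 1) + 2 * s) * T ^ (2 * s + 1) *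
      pN i (i + 2 * s + 1) /
        ((1 - U ^ (i + 2 * s + 1) * T) * (pA (2 * i + 2 * s + 3) s * pD s)) := by
    intro i s
    have e1 : ((2 * s + 1) ^ 2 - 1) / 4 = s * (s - 1) + 2 * s := by
      rw [show (2 * s + 1) ^ 2 = (s * (s + 1)) * 4 + 1 by ring, Nat.add_sub_cancel,
        Nat.mul_div_cancel _ (by norm_num)]
      cases s with
      | zero => rfl
      | succ n => simp; ring
    rw [hc_odd i _ (by omega) (by omega), prod_conv, show i + 2 * s + 1 - i = 2 * s + 1 by omega,
      show (2 * s + 1 - 1) / 2 = s by omega, e1,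
      show i + (i + 2 * s + 1) + 2 = 2 * i + 2 * s + 3 by omega]
    rfl
  -- pairs, even distance
  have pairE : ∀ i r s, b i (i + 2 * r) * c (i + 2 * r) (i + 2 * (r + s))
        + b i (i + 2 * r + 1) * c (i + 2 * r + 1) (i + 2 * (r + s))
      = T ^ (2 * (r + s)) * pN i (i + 2 * (r + s)) * (1 - U ^ (i + 2 * (r + s)) * T) *
          (1 - U ^ (i + 2 * (r + s) + 1) * T) /
          ((1 - U ^ (i + 1) * T) * (1 - U ^ (i + 2 * (r + s)) * T)) * pf i r s := by
    intro i r s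
    have h1 := pA_ne (2 * i + 3) r
    have h2 := pD_ne r
    have h9 := one_sub_ne1 (i + 1)
    have h10 := one_sub_ne1 (i + 2 * (r + s))
    cases s with
    | zero =>
      rw [hc_zero (i + 2 * r + 1) _ (by omega), bE]
      have := cE (i + 2 * r) 0
      simp only [mul_zero, add_zero, zero_mul, pow_zero] at this h10 ⊢
      rw [this]
      simp only [pf, pA, pD, pN]
      simp
      simp only [pA, pD] at h1 h2
      field_simp
    | succ s =>
      have hc1 := cE (i + 2 * r) (s + 1)
      have hc2 := cO (i + 2 * r + 1) s
      rw [show i + 2 * r + 2 * (s + 1) = i + 2 * (r + (s + 1)) by ring] at hc1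
      rw [show i + 2 * r + 1 + 2 * s + 1 = i + 2 * (r + (s + 1)) by ring] at hc2
      rw [hc1, hc2, bE, bO, pf, ← pN_mul i (i + 2 * r) (i + 2 * (r + (s + 1))) (by omega) (by omega)]
      have n1 := pN_mul i (i + 2 * r) (i + 2 * (r + (s + 1))) (by omega) (by omega)
      have n2 := pN_mul i (i + 2 * r + 1) (i + 2 * (r + (s + 1))) (by omega) (by omega)
      have n3 : pN i (i + 2 * r + 1) * pN (i + 2 * r + 1) (i + 2 * (r + (s + 1)))
        = pN i (i + 2 * r) * pN (i + 2 * r) (i + 2 * (r + (s + 1))) := by rw [n1, n2]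
      have e1 : (s + 1) * (s + 1 - 1) = s * (s - 1) + 2 * s := by
        cases s with
        | zero => rfl
        | succ n => simp; ring
      rw [e1, pD_succ s, show 2 * (i + 2 * r) + 2 * (s + 1) + 1 = 2 * i + 4 * r + 2 * s + 3 by ring,
        show 2 * i + 4 * r + 2 * (s + 1) + 1 = 2 * i + 4 * r + 2 * s + 3 by ring,
        show 2 * (i + 2 * r + 1) + 2 * s + 3 = 2 * i + 4 * r + 2 * s + 5 by ring, pA_succ',
        show 2 * i + 4 * r + 2 * s + 3 + 2 = 2 * i + 4 * r + 2 * s + 5 by ring]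
      have h3 := pD_ne s
      have h4 := pA_ne (2 * i + 4 * r + 2 * s + 5) s
      have h7 : (U ^ (2 * (s + 1)) - 1 : Fut) ≠ 0 := U_pow_ne (2 * s + 1)
      have h8 := one_sub_ne2 (2 * i + 4 * r + 2 * s + 3)
      have main : U ^ (2 * (s + 1)) * (1 - U ^ (i + 2 * r) * T) * (1 - U ^ (i + 2 * r + 1) * T)
          - (U ^ (2 * (s + 1)) - 1) * (1 - U ^ (2 * i + 4 * r + 2 * s + 3) * T ^ 2)
          = (1 - U ^ (i + 2 * (r + (s + 1))) * T) * (1 - U ^ (i + 2 * (r + (s + 1)) + 1) * T) := by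
        ring
      have eT : T ^ (2 * (r + (s + 1))) = T ^ (2 * r) * T ^ (2 * (s + 1)) := by ring
      have eT2 : T ^ (2 * r + 1) * T ^ (2 * s + 1) = T ^ (2 * r) * T ^ (2 * (s + 1)) := by ring
      rw [eT, pow_add U _ (2 * (s + 1)), pow_succ (-1 : Fut)]
      generalize (1 - U ^ (2 * i + 4 * r + 2 * s + 3) * T ^ 2 : Fut) = x8 at *
      generalize pA (2 * i + 3) r = x1 at *
      generalize pD r = x2 at *
      generalize pD s = x3 at *
      generalize pA (2 * i + 4 * r + 2 * s + 5) s = x4 at *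
      generalize (1 - U ^ (i + 1) * T : Fut) = x9 at *
      generalize U ^ (s * (s - 1) + 2 * s) = y1 at *
      generalize (-1 : Fut) ^ r = y3 at *
      generalize (1 - U ^ (i + 2 * (r + (s + 1))) * T : Fut) = x10 at *
      generalize (1 - U ^ (i + 2 * (r + (s + 1)) + 1) * T : Fut) = x11 at *
      generalize (1 - U ^ (i + 2 * r) * T : Fut) = x12 at *
      generalize (1 - U ^ (i + 2 * r + 1) * T : Fut) = x13 at *
      generalize U ^ (2 * (s + 1)) = y4 at *
      generalize T ^ (2 * r) = z1 at *
      generalize T ^ (2 * (s + 1)) = z2 at *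
      generalize T ^ (2 * r + 1) = z3 at *
      generalize T ^ (2 * s + 1) = z4 at *
      generalize pN i (i + 2 * r + 1) = m1 at *
      generalize pN (i + 2 * r + 1) (i + 2 * (r + (s + 1))) = m2 at *
      generalize pN i (i + 2 * r) = m3 at *
      generalize pN (i + 2 * r) (i + 2 * (r + (s + 1))) = m4 at *
      have lhs : y3 * z1 * x13 * m3 / (x9 * (x1 * x2)) *
          (y1 * y4 * z2 * x12 * m4 / (x10 * (x8 * x4 * (x3 * (y4 - 1))))) +
          y3 * -1 * z3 * m1 / (x9 * (x1 * x2)) * (y1 * z4 * m2 / (x10 * (x4 * x3)))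
          = y3 * y1 * (z1 * z2 * (m3 * m4) * (y4 * x12 * x13)
              - (z3 * z4) * (m1 * m2) * ((y4 - 1) * x8)) /
            (x9 * x10 * x1 * x2 * x3 * x4 * x8 * (y4 - 1)) := by
        field_simp
        ring
      rw [lhs, eT2, n3, ← mul_sub, main]
      field_simp
  have pairO : ∀ i r s, b i (i + 2 * r) * c (i + 2 * r) (i + 2 * (r + s) + 1)
        + b i (i + 2 * r + 1) * c (i + 2 * r + 1) (i + 2 * (r + s) + 1) = 0 := by
    intro i r s
    have hc1 := cO (i + 2 * r) s
    have hc2 := cE (i + 2 * r + 1) s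
    rw [show i + 2 * r + 2 * s + 1 = i + 2 * (r + s) + 1 by ring] at hc1
    rw [show i + 2 * r + 1 + 2 * s = i + 2 * (r + s) + 1 by ring] at hc2
    have n1 := pN_mul i (i + 2 * r) (i + 2 * (r + s) + 1) (by omega) (by omega)
    have n2 := pN_mul i (i + 2 * r + 1) (i + 2 * (r + s) + 1) (by omega) (by omega)
    rw [hc1, hc2, bE, bO, show 2 * (i + 2 * r + 1) + 2 * s + 1 = 2 * (i + 2 * r) + 2 * s + 3 by ring]
    rw [div_mul_div_comm, div_mul_div_comm, ← add_div]
    refine div_eq_zero_iff.2 (Or.inl ?_)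
    have n3 := n1.trans n2.symm
    linear_combination (-1) ^ r * T ^ (2 * r + 2 * s + 1) * (1 - U ^ (i + 2 * r + 1) * T)
      * U ^ (s * (s - 1) + 2 * s) * n3
  have red : ∀ n i j M : ℕ, j ≤ n → j < i + 2 * M →
      ∑ k ∈ Finset.range (n + 1), b i k * c k j
        = ∑ r ∈ Finset.range M, (b i (i + 2 * r) * c (i + 2 * r) j
          + b i (i + 2 * r + 1) * c (i + 2 * r + 1) j) := by
    intro n i j M hj hM
    have s1 : ∑ k ∈ Finset.Icc i j, b i k * c k j
        = ∑ k ∈ Finset.range (n + 1), b i k * c k j := by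
      refine Finset.sum_subset ?_ ?_
      · intro x hx; simp at hx ⊢; omega
      · intro x _ hx
        by_cases h : x < i
        · rw [hb_zero _ _ h, zero_mul]
        · rw [hc_zero x j (by simp at hx; omega), mul_zero]
    have s2 : ∑ k ∈ Finset.Icc i j, b i k * c k j
        = ∑ k ∈ Finset.Ico i (i + 2 * M), b i k * c k j := by
      refine Finset.sum_subset ?_ ?_
      · intro x hx; simp at hx ⊢; omega
      · intro x hx' hx
        rw [hc_zero x j (by simp at hx hx'; omega), mul_zero]
    rw [← s1, s2, Finset.sum_Ico_eq_sum_range, Nat.add_sub_cancel_left, sum_pair]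
    rfl
  intro n
  ext i j
  obtain ⟨i, hi⟩ := i
  obtain ⟨j, hj⟩ := j
  rw [Matrix.mul_apply]
  simp only [Matrix.of_apply]
  rw [Fin.sum_univ_eq_sum_range (fun k => b i k * c k j) (n + 1), Matrix.one_apply]
  simp only [Fin.mk.injEq]
  rcases lt_trichotomy j i with h | h | h
  · rw [red n i j 0 (by omega) (by omega), if_neg (by omega)]; simp
  · subst h
    rw [red n j j 1 (by omega) (by omega), if_pos rfl]
    have := pairE j 0 0
    have h9 := one_sub_ne1 (j + 1)
    have h10 := one_sub_ne1 j
    simp only [mul_zero, add_zero, pf] at this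
    simp [this, pA, pD, pN]
    rw [mul_comm, div_self (mul_ne_zero h9 h10)]
  · rw [if_neg (by omega)]
    obtain ⟨d, rfl⟩ : ∃ d, j = i + d := ⟨j - i, by omega⟩
    rcases Nat.even_or_odd' d with ⟨m, rfl | rfl⟩
    · rw [red n i _ (m + 1) (by omega) (by omega)]
      have : ∀ r ∈ Finset.range (m + 1), (b i (i + 2 * r) * c (i + 2 * r) (i + 2 * m)
          + b i (i + 2 * r + 1) * c (i + 2 * r + 1) (i + 2 * m))
          = T ^ (2 * m) * pN i (i + 2 * m) * (1 - U ^ (i + 2 * m) * T) *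
          (1 - U ^ (i + 2 * m + 1) * T) /
          ((1 - U ^ (i + 1) * T) * (1 - U ^ (i + 2 * m) * T)) * pf i r (m - r) := by
        intro r hr
        have := pairE i r (m - r)
        rwa [show r + (m - r) = m by simp at hr; omega] at this
      rw [Finset.sum_congr rfl this, ← Finset.mul_sum, sum_pf i m (by omega), mul_zero]
    · rw [red n i _ (m + 1) (by omega) (by omega)]
      refine Finset.sum_eq_zero fun r hr => ?_
      have := pairO i r (m - r)
      rwa [show r + (m - r) = m by simp at hr; omega] at this
end

section
/- Fix ε ∈ {1, −1}. Define, in F = ℚ(u, t), for 0 ≤ i ≤ j with i ≡ j (mod 2): c_{ij} = ε^{(j−i)/2} u^{((j−i)/2)^2} t^{j−i} (∏_{k=i+1}^{j}(u^{k} − 1)) / (∏_{k=1}^{(j−i)/2}(1 − u^{i+j−1+2k} t^{2})(u^{2k} − 1)), and c_{ij} = 0 otherwise (in particular when i > j or i ≢ j mod 2). Then for every integer n ≥ 0, the (n+1)×(n+1) matrices B = (b_{ij})_{0 ≤ i,j ≤ n} and C = (c_{ij})_{0 ≤ i,j ≤ n} satisfy B·C = I_{n+1}; equivalently, ∑_{k=i}^{j}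 b_{ik} c_{kj} equals 1 if i = j and equals 0 if i < j. (This is the explicit inverse of the change-of-basis matrix between the Eisenstein series attached to the cusps w_ν and the U(p)-eigenfunctions, for the quadratic character, with ε = χ_p(−1).) -/
theorem aux_tele {K : Type*} [Field K] (q x : K) (P Q : ℕ → K)
    (hP : ∀ m, P (m + 1) = P m * (1 - x * q ^ (m + 1)))
    (hQ : ∀ m, Q (m + 1) = Q m * (q ^ (m + 1) - 1))
    (hP0 : ∀ m, P m ≠ 0) (hQ0 : ∀ m, Q m ≠ 0) (n : ℕ) (m : ℕ) (hm : m ≤ n) (hQ1 : Q 0 = 1) (hP1 : P 0 = 1) :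
    ∑ l ∈ Finset.range (m + 1), (-1) ^ l * q ^ ((n + 1 - l).choose 2) * P (l + n) /
      (P l * Q l * Q (n + 1 - l)) =
    (-1) ^ m * q ^ ((n + 1 - m).choose 2) * P (m + 1 + n) /
      (P m * Q m * Q (n - m) * ((1 - x * q ^ (n + 1)) * (q ^ (n + 1) - 1))) := by
  have hx : ∀ m, 1 - x * q ^ (m + 1) ≠ 0 := fun m h => hP0 (m + 1) (by rw [hP, h, mul_zero])
  have hq : ∀ m, q ^ (m + 1) - 1 ≠ 0 := fun m h => hQ0 (m + 1) (by rw [hQ, h, mul_zero])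
  induction m with
  | zero =>
    have h1 := hx n
    have h2 := hq n
    have h3 := hQ0 n
    have h4 := hP0 n
    simp only [zero_add, Finset.sum_range_one, Nat.sub_zero, hQ, hP1, hQ1, pow_zero, one_mul]
    rw [show 1 + n = n + 1 by ring, hP]
    generalize 1 - x * q ^ (n + 1) = d at *
    generalize q ^ (n + 1) - 1 = d' at *
    field_simp
  | succ m ih =>
    obtain ⟨r, rfl⟩ : ∃ r, n = m + 1 + r := ⟨n - (m + 1), by omega⟩
    rw [Finset.sum_range_succ, ih (by omega)]
    have e1 : m + 1 + r + 1 - m = r + 1 + 1 := by omega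
    have e2 : m + 1 + r - m = r + 1 := by omega
    have e3 : m + 1 + r + 1 - (m + 1) = r + 1 := by omega
    have e4 : m + 1 + r - (m + 1) = r := by omega
    have e5 : (r + 1 + 1).choose 2 = (r + 1) + (r + 1).choose 2 := by
      rw [Nat.choose_succ_succ' (r + 1) 1]; simp
    rw [e1, e2, e3, e4, e5]
    have e6 : m + 1 + 1 + (m + 1 + r) = (m + 1 + (m + 1 + r)) + 1 := by ring
    rw [e6, hP (m + 1 + (m + 1 + r)), hP m, hQ m, hQ r]
    have h1 := hx (m + 1 + r)
    have h2 := hq (m + 1 + r)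
    have h3 := hQ0 m
    have h4 := hP0 m
    have h5 := hQ0 r
    have h6 := hx m
    have h7 := hq m
    have h8 := hq r
    generalize (r + 1).choose 2 = w
    generalize P (m + 1 + (m + 1 + r)) = p
    have a1 : q ^ (m + 1 + r + 1) = q ^ (m + 1) * q ^ (r + 1) := by ring
    have a2 : q ^ (m + 1 + (m + 1 + r) + 1) = q ^ (m + 1) * q ^ (m + 1) * q ^ (r + 1) := by ring
    rw [a1] at h1 h2
    rw [a1, a2, pow_add q (r + 1) w, pow_succ (-1 : K) m]
    generalize q ^ (m + 1) = A at *
    generalize q ^ (r + 1) = B at *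
    obtain ⟨d, hd⟩ : ∃ d, d = 1 - x * (A * B) := ⟨_, rfl⟩
    obtain ⟨d', hd'⟩ : ∃ d', d' = A * B - 1 := ⟨_, rfl⟩
    obtain ⟨d2, hd2⟩ : ∃ d, d = 1 - x * A := ⟨_, rfl⟩
    obtain ⟨d3, hd3⟩ : ∃ d, d = A - 1 := ⟨_, rfl⟩
    obtain ⟨d4, hd4⟩ : ∃ d, d = B - 1 := ⟨_, rfl⟩
    rw [← hd] at h1 ⊢
    rw [← hd'] at h2 ⊢
    rw [← hd2] at h6 ⊢
    rw [← hd3] at h7 ⊢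
    rw [← hd4] at h8 ⊢
    field_simp
    rw [hd, hd', hd2, hd3, hd4]
    ring

theorem aux_sum {K : Type*} [Field K] (q x : K) (P Q : ℕ → K)
    (hP : ∀ m, P (m + 1) = P m * (1 - x * q ^ (m + 1)))
    (hQ : ∀ m, Q (m + 1) = Q m * (q ^ (m + 1) - 1))
    (hP0 : ∀ m, P m ≠ 0) (hQ0 : ∀ m, Q m ≠ 0) (n : ℕ) (hQ1 : Q 0 = 1) (hP1 : P 0 = 1) :
    ∑ l ∈ Finset.range (n + 1 + 1), (-1) ^ l * q ^ ((n + 1 - l).choose 2) * P (l + n) /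
      (P l * Q l * Q (n + 1 - l)) = 0 := by
  have hx : ∀ m, 1 - x * q ^ (m + 1) ≠ 0 := fun m h => hP0 (m + 1) (by rw [hP, h, mul_zero])
  have hq : ∀ m, q ^ (m + 1) - 1 ≠ 0 := fun m h => hQ0 (m + 1) (by rw [hQ, h, mul_zero])
  rw [Finset.sum_range_succ, aux_tele q x P Q hP hQ hP0 hQ0 n n le_rfl hQ1 hP1]
  have e1 : n + 1 - n = 1 := by omega
  have h1 := hx n
  have h2 := hq n
  have h3 := hQ0 n
  have h4 := hP0 n
  simp only [e1, Nat.sub_self, hQ1, hP n, hQ n]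
  norm_num
  generalize 1 - x * q ^ (n + 1) = d at *
  generalize q ^ (n + 1) - 1 = d' at *
  field_simp
  ring

theorem aux_U (k : ℕ) : U ^ (k + 1) - 1 ≠ 0 := by
  intro h
  have h' : algebraMap (MvPolynomial (Fin 2) ℚ) Fut (MvPolynomial.X 0 ^ (k + 1) - 1) = 0 := by
    simpa [U] using h
  rw [FaithfulSMul.algebraMap_eq_zero_iff] at h'
  have := congrArg (MvPolynomial.eval (fun _ => (0 : ℚ))) h'
  simp at this

theorem aux_UT (k : ℕ) : 1 - U ^ k * T ^ 2 ≠ 0 := by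
  intro h
  have h' : algebraMap (MvPolynomial (Fin 2) ℚ) Fut
      (1 - MvPolynomial.X 0 ^ k * MvPolynomial.X 1 ^ 2) = 0 := by
    simpa [U, T] using h
  rw [FaithfulSMul.algebraMap_eq_zero_iff] at h'
  have := congrArg (MvPolynomial.eval (fun _ => (0 : ℚ))) h'
  simp at this

theorem aux_icc {K : Type*} [CommMonoid K] (f : ℕ → K) (m : ℕ) :
    ∏ k ∈ Finset.Icc 1 m, f k = ∏ k ∈ Finset.range m, f (k + 1) := by
  induction m with
  | zero => simp
  | succ m ih => rw [Finset.prod_Icc_succ_top (by omega), ih, Finset.prod_range_succ]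

theorem aux_range {K : Type*} [AddCommMonoid K] (f : ℕ → K) (n i N : ℕ) (h : i + 2 * N < n)
    (h0 : ∀ k, ¬ (∃ m, m ≤ N ∧ k = i + 2 * m) → f k = 0) :
    ∑ k ∈ Finset.range n, f k = ∑ m ∈ Finset.range (N + 1), f (i + 2 * m) := by
  rw [← Finset.sum_image (s := Finset.range (N + 1)) (g := fun m => i + 2 * m) (f := f)
    (fun a _ b _ hab => by simp only at hab; omega)]
  symm
  apply Finset.sum_subset
  · intro k hk
    simp only [Finset.mem_image, Finset.mem_range] at hk ⊢
    obtain ⟨m, hm, rfl⟩ := hk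
    omega
  · intro k _ hk
    apply h0
    rintro ⟨m, hm, rfl⟩
    exact hk (Finset.mem_image.2 ⟨m, Finset.mem_range.2 (by omega), rfl⟩)

theorem aux_fin {K : Type*} [Field K] (y1 y2 y3 y4 y5 z1 z2 w1 w2 w3 w4 w5 w6 w7 w8 : K)
    (h1 : y1 ≠ 0) (h2 : y2 ≠ 0) (h3 : y3 ≠ 0) (h4 : y4 ≠ 0) (h5 : y5 ≠ 0) :
    w8 * w6 * w2 * w4 * z1 / (y3 * y4) * (w7 * (w1 * w3) * w5 * z2 / (y2 * y5 / y1)) =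
    w6 * w7 * (w2 * w1) * (w4 * w5) * (z1 * z2) / y2 * (w8 * w3 * y1 / (y3 * y4 * y5)) := by
  field_simp

/-- The matrix `C = (c_{ij})` of the displayed closed formulas is the inverse of the
change-of-basis matrix `B = (b_{ij})` between the Eisenstein series attached to the
cusps `w_ν` and the `U(p)`-eigenfunctions, for the quadratic character
(`ε = χ_p(−1)`). -/
theorem c_chip_inverse (ε : Fut) (hε : ε = 1 ∨ ε = -1) (b c : ℕ → ℕ → Fut)
    -- b_{ij} for 0 ≤ i ≤ j with j − i even
    (hb_even : ∀ i j : ℕ, i ≤ j → (j - i) % 2 = 0 →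
      b i j = (-ε) ^ ((j - i) / 2) * U ^ ((j - i) / 2) * T ^ (j - i) *
        (∏ k ∈ Finset.Icc (i + 1) j, (U ^ k - 1)) /
        ∏ k ∈ Finset.Icc 1 ((j - i) / 2),
          ((1 - U ^ (2 * i + 1 + 2 * k) * T ^ 2) * (U ^ (2 * k) - 1)))
    -- b_{ij} = 0 otherwise
    (hb_zero : ∀ i j : ℕ, ¬(i ≤ j ∧ (j - i) % 2 = 0) → b i j = 0)
    -- c_{ij} for 0 ≤ i ≤ j with i ≡ j (mod 2)
    (hc_even : ∀ i j : ℕ, i ≤ j → (j - i) % 2 = 0 →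
      c i j = ε ^ ((j - i) / 2) * U ^ (((j - i) / 2) ^ 2) * T ^ (j - i) *
        (∏ k ∈ Finset.Icc (i + 1) j, (U ^ k - 1)) /
        ∏ k ∈ Finset.Icc 1 ((j - i) / 2),
          ((1 - U ^ (i + j - 1 + 2 * k) * T ^ 2) * (U ^ (2 * k) - 1)))
    -- c_{ij} = 0 otherwise
    (hc_zero : ∀ i j : ℕ, ¬(i ≤ j ∧ (j - i) % 2 = 0) → c i j = 0) :
    ∀ n : ℕ,
      (Matrix.of fun i j : Fin (n + 1) => b i j) * (Matrix.of fun i j : Fin (n + 1) => c i j)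
        = 1 := by
  intro n
  ext i j
  obtain ⟨i, hi⟩ := i
  obtain ⟨j, hj⟩ := j
  simp only [Matrix.mul_apply, Matrix.of_apply, Matrix.one_apply, Fin.mk.injEq]
  rw [Fin.sum_univ_eq_sum_range (fun k => b i k * c k j) (n + 1)]
  by_cases hij : i ≤ j ∧ (j - i) % 2 = 0
  swap
  · rw [if_neg (by rintro rfl; simp at hij)]
    apply Finset.sum_eq_zero
    intro k _
    by_cases h1 : i ≤ k ∧ (k - i) % 2 = 0
    · rw [hc_zero k j (by omega), mul_zero]
    · rw [hb_zero i k h1, zero_mul]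
  obtain ⟨N, rfl⟩ : ∃ N, j = i + 2 * N := ⟨(j - i) / 2, by omega⟩
  rw [aux_range (fun k => b i k * c k (i + 2 * N)) (n + 1) i N hj]
  swap
  · intro k hk
    by_cases h1 : i ≤ k ∧ (k - i) % 2 = 0
    · rw [hc_zero k _ (fun h2 => hk ⟨(k - i) / 2, by omega, by omega⟩), mul_zero]
    · rw [hb_zero i k h1, zero_mul]
  rcases N with _ | N
  · simp [hb_even i i le_rfl, hc_even i i le_rfl]
  rw [if_neg (by omega)]
  set x : Fut := U ^ (2 * i + 1) * T ^ 2 with hx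
  set q : Fut := U ^ 2 with hq
  set P : ℕ → Fut := fun m => ∏ k ∈ Finset.range m, (1 - x * q ^ (k + 1)) with hPd
  set Q : ℕ → Fut := fun m => ∏ k ∈ Finset.range m, (q ^ (k + 1) - 1) with hQd
  have hxq : ∀ k, x * q ^ k = U ^ (2 * i + 1 + 2 * k) * T ^ 2 := by
    intro k; rw [hx, hq]; ring
  have hqq : ∀ k, q ^ k = U ^ (2 * k) := by
    intro k; rw [hq]; ring
  have hP0 : ∀ m, P m ≠ 0 := by
    intro m
    refine Finset.prod_ne_zero_iff.2 fun k _ => ?_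
    rw [hxq]; exact aux_UT _
  have hQ0 : ∀ m, Q m ≠ 0 := by
    intro m
    refine Finset.prod_ne_zero_iff.2 fun k _ => ?_
    rw [hqq]; exact aux_U (2 * k + 1)
  have key := aux_sum q x P Q (fun m => Finset.prod_range_succ _ _)
    (fun m => Finset.prod_range_succ _ _) hP0 hQ0 N (by simp [hQd]) (by simp [hPd])
  rw [← mul_zero (ε ^ (N + 1) * U ^ (N + 1) * T ^ (2 * (N + 1)) *
    (∏ k ∈ Finset.Icc (i + 1) (i + 2 * (N + 1)), (U ^ k - 1)) / P (2 * N + 1)), ← key,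
    Finset.mul_sum]
  apply Finset.sum_congr rfl
  intro m hm
  obtain ⟨M, hM⟩ : ∃ M, N + 1 = m + M := ⟨N + 1 - m, by simp at hm; omega⟩
  rw [hb_even i _ (by omega) (by omega), hc_even _ _ (by omega) (by omega)]
  have e1 : i + 2 * m - i = 2 * m := by omega
  have e2 : i + 2 * (N + 1) - (i + 2 * m) = 2 * M := by omega
  have e3 : 2 * m / 2 = m := by omega
  have e4 : 2 * M / 2 = M := by omega
  have e5 : N + 1 - m = M := by omega
  rw [e1, e2, e3, e4, e5]
  have p1 : ∏ k ∈ Finset.Icc (i + 1) (i + 2 * (N + 1)), (U ^ k - 1) =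
      (∏ k ∈ Finset.Icc (i + 1) (i + 2 * m), (U ^ k - 1)) *
      ∏ k ∈ Finset.Icc (i + 2 * m + 1) (i + 2 * (N + 1)), (U ^ k - 1) := by
    have := Finset.prod_Ico_consecutive (fun k => U ^ k - 1) (m := i + 1) (n := i + 2 * m + 1)
      (k := i + 2 * (N + 1) + 1) (by omega) (by omega)
    simpa [Finset.Ico_add_one_right_eq_Icc] using this.symm
  have p2 : ∏ k ∈ Finset.Icc 1 m, ((1 - U ^ (2 * i + 1 + 2 * k) * T ^ 2) * (U ^ (2 * k) - 1)) =
      P m * Q m := by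
    rw [aux_icc, Finset.prod_mul_distrib]
    simp only [hPd, hQd, hxq]
    simp only [hqq]
  have p3 : P (N + m) * ∏ k ∈ Finset.Icc 1 M,
      ((1 - U ^ (i + 2 * m + (i + 2 * (N + 1)) - 1 + 2 * k) * T ^ 2) * (U ^ (2 * k) - 1)) =
      P (2 * N + 1) * Q M := by
    rw [aux_icc, Finset.prod_mul_distrib, ← mul_assoc]
    have : 2 * N + 1 = (N + m) + M := by omega
    rw [this]
    simp only [hPd, hQd]
    rw [Finset.prod_range_add _ (N + m) M]
    simp only [hxq]
    simp only [hqq]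
    congr 2
    apply Finset.prod_congr rfl
    intro k _
    congr 3
    omega
  have p3' : ∏ k ∈ Finset.Icc 1 M,
      ((1 - U ^ (i + 2 * m + (i + 2 * (N + 1)) - 1 + 2 * k) * T ^ 2) * (U ^ (2 * k) - 1)) =
      P (2 * N + 1) * Q M / P (N + m) := by
    exact eq_div_of_mul_eq (hP0 _) (by rw [← p3, mul_comm])
  have hch : M ^ 2 = M + 2 * M.choose 2 := by
    clear * -
    induction M with
    | zero => rfl
    | succ M ih => 
      have : (M + 1).choose 2 = M + M.choose 2 := by
        rw [Nat.choose_succ_succ' M 1]; simp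
      rw [this]; nlinarith
  rw [p1, p2, p3', hqq, hch, hM, add_comm m N, neg_pow]
  rw [pow_add U M, mul_add 2 m M, pow_add T, pow_add ε, pow_add U m M]
  exact aux_fin _ _ _ _ _ _ _ _ _ _ _ _ _ _ _ (hP0 _) (hP0 _) (hP0 _) (hQ0 _) (hQ0 _)
end

section
/- Let n ≥ 1 be an odd integer and let a, b be nonnegative integers with a + b = n. For s ∈ ℂ set g(s) = Γ*_{(n+1)/2}(s/2) · Γ*_{(n−1)/2}(s/2) / (Γ*_a(s/2) · Γ*_b(s/2)). Then for every s ∈ ℂ such that for every integer j with −1 ≤ j ≤ n + 2 neither (s − j)/2 nor (n + 1 − s − j)/2 is a nonpositive integer (so that no Gamma factor involved vanishes or has a pole), one has g(n + 1 − s) = (−1)^{((a−b)^2 − 1)/8} · g(s). (Note that a − b is odd, so ((a−b)^2 − 1)/8 is an integer.) -/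
/-- `Γ*_r(s) = ∏_{j=0}^{r−1} Γ(s − j/2)`, with `Γ*_0(s) = 1`. -/
noncomputable def GammaStar (r : ℕ) (s : ℂ) : ℂ :=
  ∏ j ∈ Finset.range r, Complex.Gamma (s - (j : ℂ) / 2)

theorem gs_succ (r : ℕ) (s : ℂ) :
    GammaStar (r + 1) s = GammaStar r s * Complex.Gamma (s - (r : ℂ) / 2) := by
  simp [GammaStar, Finset.prod_range_succ]

theorem gamma_refl_shift (A B : ℂ) (k : ℕ) (h : A = B + k) :
    Complex.Gamma B * Complex.Gamma (1 - B) =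
      (-1) ^ k * (Complex.Gamma A * Complex.Gamma (1 - A)) := by
  rw [Complex.Gamma_mul_Gamma_one_sub, Complex.Gamma_mul_Gamma_one_sub, h]
  have : Complex.sin (Real.pi * (B + k)) = (-1) ^ k * Complex.sin (Real.pi * B) := by
    clear h
    induction k with
    | zero => simp
    | succ k ih =>
      rw [pow_succ, mul_right_comm, ← ih, mul_neg_one, ← Complex.sin_add_pi]
      congr 1; push_cast; ring
  rw [this]
  rcases neg_one_pow_eq_or ℂ k with h | h <;> rw [h] <;> simp [div_neg]

theorem gs_main (m : ℕ) (x y : ℂ) (hxy : x + y = m + 1)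
    (hx : ∀ j : ℕ, j ≤ 2 * m → Complex.Gamma (x - (j : ℂ) / 2) ≠ 0)
    (hy : ∀ j : ℕ, j ≤ 2 * m → Complex.Gamma (y - (j : ℂ) / 2) ≠ 0) (k : ℕ) :
    ∀ b : ℕ, b + k = m →
      GammaStar (m + 1 + k) x * GammaStar b x * (GammaStar (m + 1) y * GammaStar m y) =
      (-1) ^ (∑ i ∈ Finset.range (k + 1), i) *
      (GammaStar (m + 1) x * GammaStar m x * (GammaStar (m + 1 + k) y * GammaStar b y)) := by
  induction k with
  | zero => intro b hb; obtain rfl : b = m := by omega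
            simp
  | succ k ih =>
    intro b hb
    have ih := ih (b + 1) (by omega)
    rw [gs_succ b, gs_succ b] at ih
    rw [← add_assoc (m + 1) k, gs_succ (m + 1 + k), gs_succ (m + 1 + k),
      Finset.sum_range_succ, pow_add]
    have hm : (m : ℂ) = b + k + 1 := by rw [← hb]; push_cast; ring
    have h := gamma_refl_shift (x - (b : ℂ) / 2) (x - ((m + 1 + k : ℕ) : ℂ) / 2) (k + 1)
      (by push_cast; rw [hm]; ring)
    have e1 : 1 - (x - (b : ℂ) / 2) = y - ((m + 1 + k : ℕ) : ℂ) / 2 := by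
      push_cast; linear_combination hxy.symm - hm / 2
    have e2 : 1 - (x - ((m + 1 + k : ℕ) : ℂ) / 2) = y - (b : ℂ) / 2 := by
      push_cast; linear_combination hxy.symm - hm / 2
    rw [e1, e2] at h
    have h1 := hx b (by omega)
    have h2 := hy b (by omega)
    apply mul_right_cancel₀ (mul_ne_zero h1 h2)
    generalize Complex.Gamma (x - (b : ℂ) / 2) = A at *
    generalize Complex.Gamma (y - (b : ℂ) / 2) = A' at *
    generalize Complex.Gamma (x - ((m + 1 + k : ℕ) : ℂ) / 2) = B at *
    generalize Complex.Gamma (y - ((m + 1 + k : ℕ) : ℂ) / 2) = B' at *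
    generalize ((-1 : ℂ) ^ (∑ i ∈ Finset.range (k + 1), i)) = e at *
    generalize ((-1 : ℂ) ^ (k + 1)) = f at *
    linear_combination (B * A') * ih + e * (GammaStar (m + 1) x * GammaStar m x *
      (GammaStar (m + 1 + k) y * GammaStar b y)) * A' * h

theorem gs_ne (r m : ℕ) (x : ℂ) (hr : r ≤ 2 * m + 1)
    (hx : ∀ j : ℕ, j ≤ 2 * m → Complex.Gamma (x - (j : ℂ) / 2) ≠ 0) : GammaStar r x ≠ 0 := by
  refine Finset.prod_ne_zero_iff.2 fun j hj => hx j ?_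
  have := Finset.mem_range.1 hj
  omega

theorem sign_eq (k : ℕ) : ((2 * (k : ℤ) + 1) ^ 2 - 1) / 8 =
    ((∑ i ∈ Finset.range (k + 1), i : ℕ) : ℤ) := by
  have h : ((∑ i ∈ Finset.range (k + 1), i : ℕ) : ℤ) * 2 = (k + 1) * k := by
    exact_mod_cast Finset.sum_range_id_mul_two (k + 1)
  apply Int.ediv_eq_of_eq_mul_left (by norm_num)
  linear_combination -4 * h

theorem gs_quot (m : ℕ) (x y : ℂ) (hxy : x + y = m + 1)
    (hx : ∀ j : ℕ, j ≤ 2 * m → Complex.Gamma (x - (j : ℂ) / 2) ≠ 0)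
    (hy : ∀ j : ℕ, j ≤ 2 * m → Complex.Gamma (y - (j : ℂ) / 2) ≠ 0) (k b : ℕ) (hb : b + k = m) :
      GammaStar (m + 1) y * GammaStar m y / (GammaStar (m + 1 + k) y * GammaStar b y) =
      (-1) ^ (∑ i ∈ Finset.range (k + 1), i) *
      (GammaStar (m + 1) x * GammaStar m x / (GammaStar (m + 1 + k) x * GammaStar b x)) := by
  have h := gs_main m x y hxy hx hy k b hb
  have h1 := gs_ne (m + 1 + k) m x (by omega) hx
  have h2 := gs_ne b m x (by omega) hx
  have h3 := gs_ne (m + 1 + k) m y (by omega) hy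
  have h4 := gs_ne b m y (by omega) hy
  rw [mul_div_assoc', div_eq_div_iff (mul_ne_zero h3 h4) (mul_ne_zero h1 h2)]
  linear_combination h

/-- Lemma 3.3(1): for odd `n = a + b`, the Gamma factor
`g(s) = Γ*_{(n+1)/2}(s/2)·Γ*_{(n−1)/2}(s/2)/(Γ*_a(s/2)·Γ*_b(s/2))` satisfies
`g(n+1−s) = (−1)^{((a−b)²−1)/8}·g(s)` whenever no involved Gamma factor vanishes
or has a pole. -/
theorem gamma_factor_FE_odd_p1 (n : ℕ) (hn : 1 ≤ n) (hodd : Odd n)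
    (a b : ℕ) (hab : a + b = n) (g : ℂ → ℂ)
    (hg : ∀ s : ℂ, g s =
      GammaStar ((n + 1) / 2) (s / 2) * GammaStar ((n - 1) / 2) (s / 2) /
        (GammaStar a (s / 2) * GammaStar b (s / 2)))
    (s : ℂ)
    (hs : ∀ j : ℤ, -1 ≤ j → j ≤ (n : ℤ) + 2 → ∀ m : ℤ, m ≤ 0 →
      (s - (j : ℂ)) / 2 ≠ (m : ℂ) ∧ ((n : ℂ) + 1 - s - (j : ℂ)) / 2 ≠ (m : ℂ)) :
    g ((n : ℂ) + 1 - s) = (-1 : ℂ) ^ ((((a : ℤ) - (b : ℤ)) ^ 2 - 1) / 8) * g s := by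
  obtain ⟨m, rfl⟩ := hodd
  have hx : ∀ j : ℕ, j ≤ 2 * m → Complex.Gamma (s / 2 - (j : ℂ) / 2) ≠ 0 := by
    intro j hj
    refine Complex.Gamma_ne_zero fun i hi => ?_
    refine (hs j (by omega) (by push_cast; omega) (-(i : ℤ)) (by omega)).1 ?_
    push_cast
    rw [← hi]; ring
  have hy : ∀ j : ℕ, j ≤ 2 * m →
      Complex.Gamma ((((2 * m + 1 : ℕ) : ℂ) + 1 - s) / 2 - (j : ℂ) / 2) ≠ 0 := by
    intro j hj
    refine Complex.Gamma_ne_zero fun i hi => ?_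
    refine (hs j (by omega) (by push_cast; omega) (-(i : ℤ)) (by omega)).2 ?_
    rw [Int.cast_neg, Int.cast_natCast, Int.cast_natCast, ← hi]; ring
  have hxy : s / 2 + (((2 * m + 1 : ℕ) : ℂ) + 1 - s) / 2 = m + 1 := by push_cast; ring
  have q := gs_quot m _ _ hxy hx hy
  rw [hg, hg, show (2 * m + 1 + 1) / 2 = m + 1 by omega, show (2 * m + 1 - 1) / 2 = m by omega]
  rcases le_total a b with h | h
  · obtain ⟨k, rfl⟩ : ∃ k, b = m + 1 + k := ⟨b - (m + 1), by omega⟩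
    have e : ((a : ℤ) - ((m + 1 + k : ℕ) : ℤ)) ^ 2 = (2 * (k : ℤ) + 1) ^ 2 := by
      have : (a : ℤ) = m - k := by omega
      rw [this]; push_cast; ring
    rw [e, sign_eq, zpow_natCast, mul_comm (GammaStar a _), mul_comm (GammaStar a _)]
    exact q k a (by omega)
  · obtain ⟨k, rfl⟩ : ∃ k, a = m + 1 + k := ⟨a - (m + 1), by omega⟩
    have e : (((m + 1 + k : ℕ) : ℤ) - (b : ℤ)) ^ 2 = (2 * (k : ℤ) + 1) ^ 2 := by
      have : (b : ℤ) = m - k := by omega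
      rw [this]; push_cast; ring
    rw [e, sign_eq, zpow_natCast]
    exact q k b (by omega)
end

section
/- Let n ≥ 1 be an odd integer and let a, b be nonnegative integers with a + b = n. For s ∈ ℂ set g(s) = Γ*_{(n+1)/2}((s+1)/2) · Γ*_{(n−1)/2}((s−1)/2) / (Γ*_a((s+1)/2) · Γ*_b((s−1)/2)). Then for every s ∈ ℂ such that for every integer j with −1 ≤ j ≤ n + 2 neither (s − j)/2 nor (n + 1 − s − j)/2 is a nonpositive integer (so that no Gamma factor involved vanishes or has a pole), one has g(n + 1 − s) = (−1)^{((a−b−2)^2 − 1)/8} · g(s). (Note that a − b is odd, so ((a−b−2)^2 − 1)/8 is an integer.) -/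
lemma GS_ne (r : ℕ) (z : ℂ) (h : ∀ j < r, Complex.Gamma (z - (j : ℂ) / 2) ≠ 0) :
    GammaStar r z ≠ 0 := by
  unfold GammaStar
  exact Finset.prod_ne_zero_iff.mpr (fun j hj => h j (Finset.mem_range.mp hj))

lemma GS_succ (r : ℕ) (z : ℂ) :
    GammaStar (r + 1) z = GammaStar r z * Complex.Gamma (z - (r : ℂ) / 2) := by
  unfold GammaStar
  exact Finset.prod_range_succ _ _

lemma refl_shift (x y : ℂ) (m : ℤ) (h : x = y + m) :
    Complex.Gamma y * Complex.Gamma (1 - y) =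
      (-1 : ℂ) ^ m * (Complex.Gamma x * Complex.Gamma (1 - x)) := by
  rw [Complex.Gamma_mul_Gamma_one_sub, Complex.Gamma_mul_Gamma_one_sub]
  have : Complex.sin (Real.pi * x) = (-1 : ℂ) ^ m * Complex.sin (Real.pi * y) := by
    rw [h, mul_add, mul_comm (Real.pi : ℂ) (m : ℂ),
      Complex.sin_antiperiodic.add_int_mul_eq m]
    rcases Int.even_or_odd m with hm | hm
    · simp [hm.neg_one_zpow, Int.negOnePow_even m hm]
    · simp [hm.neg_one_zpow, Int.negOnePow_odd m hm]
  rw [this]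
  rcases Int.even_or_odd m with hm | hm
  · simp [hm.neg_one_zpow]
  · simp [hm.neg_one_zpow, div_neg]

/-- the Gamma factor -/
noncomputable def GG (k a b : ℕ) (s : ℂ) : ℂ :=
  GammaStar (k + 1) ((s + 1) / 2) * GammaStar k ((s - 1) / 2) /
        (GammaStar a ((s + 1) / 2) * GammaStar b ((s - 1) / 2))

lemma GG_step (k a b : ℕ) (s : ℂ) (hx : Complex.Gamma ((s + 1 - a) / 2) ≠ 0) :
    GG k a (b + 1) s = GG k (a + 1) b s *
      (Complex.Gamma ((s + 1 - a) / 2) / Complex.Gamma ((s - 1 - b) / 2)) := by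
  unfold GG
  rw [GS_succ a, GS_succ b, ← sub_div, ← sub_div]
  set X := Complex.Gamma ((s + 1 - a) / 2)
  rw [div_mul_div_comm, mul_comm _ X, mul_comm _ X, mul_assoc X, mul_assoc X,
    mul_div_mul_left _ _ hx, mul_assoc]

def EE (k a : ℕ) : ℤ := ((2 * (a : ℤ) - 2 * k - 3) ^ 2 - 1) / 8

lemma EE_step (k a : ℕ) : EE k (a + 1) = EE k a + ((a : ℤ) - k - 1) := by
  unfold EE
  have h : ((2 * ((a + 1 : ℕ) : ℤ) - 2 * k - 3) ^ 2 - 1)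
    = ((2 * (a : ℤ) - 2 * k - 3) ^ 2 - 1) + ((a : ℤ) - k - 1) * 8 := by
    push_cast; ring
  rw [h, Int.add_mul_ediv_right _ _ (by norm_num)]

lemma step_iff (k a b : ℕ) (hab : a + b + 1 = 2 * k + 1) (s t : ℂ) (ht : t = 2 * k + 2 - s)
    (hs : ∀ j : ℤ, -1 ≤ j → j ≤ 2 * (k : ℤ) + 3 →
      Complex.Gamma ((s - j) / 2) ≠ 0 ∧ Complex.Gamma ((t - j) / 2) ≠ 0) :
    GG k a (b + 1) t = (-1 : ℂ) ^ EE k a * GG k a (b + 1) s ↔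
    GG k (a + 1) b t = (-1 : ℂ) ^ EE k (a + 1) * GG k (a + 1) b s := by
  have e1 : ∀ u : ℂ, (u + 1 - a) / 2 = (u - ((a : ℤ) - 1 : ℤ)) / 2 := by
    intro u; push_cast; ring
  have e2 : ∀ u : ℂ, (u - 1 - b) / 2 = (u - ((b : ℤ) + 1 : ℤ)) / 2 := by
    intro u; push_cast; ring
  obtain ⟨hx, hx'⟩ := hs ((a : ℤ) - 1) (by omega) (by omega)
  obtain ⟨hy, hy'⟩ := hs ((b : ℤ) + 1) (by omega) (by omega)
  rw [← e1] at hx hx'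
  rw [← e2] at hy hy'
  rw [GG_step k a b s hx, GG_step k a b t hx', EE_step, zpow_add₀ (by norm_num)]
  have hk : (b : ℂ) = 2 * k - a := by
    have : (a : ℂ) + b + 1 = 2 * k + 1 := by exact_mod_cast hab
    linear_combination this
  have hr := refl_shift ((s + 1 - a) / 2) ((s - 1 - b) / 2) (-((a : ℤ) - k - 1))
    (by push_cast; rw [hk]; ring)
  rw [show 1 - (s - 1 - b) / 2 = (t + 1 - a) / 2 by rw [ht, hk]; ring,
    show 1 - (s + 1 - a) / 2 = (t - 1 - b) / 2 by rw [ht, hk]; ring, zpow_neg] at hr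
  have hc : (-1 : ℂ) ^ ((a : ℤ) - k - 1) ≠ 0 := zpow_ne_zero _ (by norm_num)
  have hc2 : (-1 : ℂ) ^ ((a : ℤ) - k - 1) * (-1 : ℂ) ^ ((a : ℤ) - k - 1) = 1 := by
    rw [← mul_zpow]; norm_num
  generalize (-1 : ℂ) ^ ((a : ℤ) - k - 1) = c at *
  generalize Complex.Gamma ((s + 1 - a) / 2) = X at *
  generalize Complex.Gamma ((t + 1 - a) / 2) = X' at *
  generalize Complex.Gamma ((s - 1 - b) / 2) = Y at *
  generalize Complex.Gamma ((t - 1 - b) / 2) = Y' at *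
  rw [inv_eq_of_mul_eq_one_left hc2] at hr
  have hq : X' / Y' = c * (X / Y) := by
    field_simp
    linear_combination hr
  rw [hq]
  have hne : c * (X / Y) ≠ 0 := mul_ne_zero hc (div_ne_zero hx hy)
  rw [← mul_left_inj' hne (a := GG k (a + 1) b t)]
  constructor
  · intro h
    rw [h]
    linear_combination (-(-1 : ℂ) ^ EE k a * GG k (a + 1) b s * (X / Y)) * hc2
  · intro h
    rw [h]
    linear_combination ((-1 : ℂ) ^ EE k a * GG k (a + 1) b s * (X / Y)) * hc2

lemma GG_base (k : ℕ) (s : ℂ)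
    (hs : ∀ j : ℤ, -1 ≤ j → j ≤ 2 * (k : ℤ) + 3 → Complex.Gamma ((s - j) / 2) ≠ 0) :
    GG k (k + 1) k s = 1 := by
  unfold GG
  apply div_self
  apply mul_ne_zero
  · apply GS_ne
    intro j hj
    have := hs ((j : ℤ) - 1) (by omega) (by omega)
    convert this using 2
    push_cast; ring
  · apply GS_ne
    intro j hj
    have := hs ((j : ℤ) + 1) (by omega) (by omega)
    convert this using 2
    push_cast; ring

theorem gamma_factor_FE_odd_p3 (n : ℕ) (hn : 1 ≤ n) (hodd : Odd n)
    (a b : ℕ) (hab : a + b = n) (g : ℂ → ℂ)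
    (hg : ∀ s : ℂ, g s =
      GammaStar ((n + 1) / 2) ((s + 1) / 2) * GammaStar ((n - 1) / 2) ((s - 1) / 2) /
        (GammaStar a ((s + 1) / 2) * GammaStar b ((s - 1) / 2)))
    (s : ℂ)
    (hs : ∀ j : ℤ, -1 ≤ j → j ≤ (n : ℤ) + 2 → ∀ m : ℤ, m ≤ 0 →
      (s - (j : ℂ)) / 2 ≠ (m : ℂ) ∧ ((n : ℂ) + 1 - s - (j : ℂ)) / 2 ≠ (m : ℂ)) :
    g ((n : ℂ) + 1 - s) = (-1 : ℂ) ^ ((((a : ℤ) - (b : ℤ) - 2) ^ 2 - 1) / 8) * g s := by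
  obtain ⟨k, hk⟩ := hodd
  have hg' : ∀ s, g s = GG k a b s := by
    intro s
    rw [hg, GG, show (n + 1) / 2 = k + 1 by omega, show (n - 1) / 2 = k by omega]
  have hE : (((a : ℤ) - (b : ℤ) - 2) ^ 2 - 1) / 8 = EE k a := by
    unfold EE
    rw [show (b : ℤ) = 2 * k + 1 - a by omega]
    congr 2
    ring
  rw [hg', hg', hE]
  set t : ℂ := (n : ℂ) + 1 - s with htd
  have ht : t = 2 * k + 2 - s := by
    rw [htd, hk]; push_cast; ring
  have hG : ∀ j : ℤ, -1 ≤ j → j ≤ 2 * (k : ℤ) + 3 →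
      Complex.Gamma ((s - j) / 2) ≠ 0 ∧ Complex.Gamma ((t - j) / 2) ≠ 0 := by
    intro j h1 h2
    have h := hs j h1 (by omega)
    constructor
    · apply Complex.Gamma_ne_zero
      intro m
      have := (h (-(m : ℤ)) (by omega)).1
      push_cast at this
      exact this
    · apply Complex.Gamma_ne_zero
      intro m
      have := (h (-(m : ℤ)) (by omega)).2
      push_cast at this
      exact this
  have key : ∀ a b : ℕ, a + b = 2 * k + 1 →
      (GG k 0 (2 * k + 1) t = (-1 : ℂ) ^ EE k 0 * GG k 0 (2 * k + 1) s ↔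
      GG k a b t = (-1 : ℂ) ^ EE k a * GG k a b s) := by
    intro a
    induction a with
    | zero =>
      intro b hb
      obtain rfl : b = 2 * k + 1 := by omega
      rfl
    | succ a ih =>
      intro b hb
      rw [ih (b + 1) (by omega)]
      exact step_iff k a b (by omega) s t ht hG
  rw [← key a b (by omega), key (k + 1) k (by omega),
    GG_base k s (fun j h1 h2 => (hG j h1 h2).1), GG_base k t (fun j h1 h2 => (hG j h1 h2).2)]
  have : EE k (k + 1) = 0 := by
    unfold EE
    rw [show (2 * ((k + 1 : ℕ) : ℤ) - 2 * k - 3) = -1 by push_cast; ring]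
    norm_num
  rw [this]
  simp
end

section
/- Let n ≥ 2 be an even integer and let a, b be nonnegative integers with a + b = n. For s ∈ ℂ define g₁(s) = Γ*_{n/2}(s/2)² / (Γ*_a(s/2) · Γ*_b(s/2)) if n/2 − a is even, and g₁(s) = Γ*_{n/2+1}(s/2) · Γ*_{n/2−1}(s/2) / (Γ*_a(s/2) · Γ*_b(s/2)) if n/2 − a is odd. Then for every s ∈ ℂ such that for every integer j with −1 ≤ j ≤ n + 2 neither (s − j)/2 nor (n + 1 − s − j)/2 is a nonpositive integer (so that no Gamma factor involved vanishes or has a pole), one has g₁(n + 1 − s) = g₁(s). -/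
lemma gs_refl (m i j : ℕ) (h : i + j + 1 = 2 * m) (s : ℂ) :
    Complex.Gamma (s / 2 - (i : ℂ) / 2) *
      Complex.Gamma ((((2 * m : ℕ) : ℂ) + 1 - s) / 2 - (j : ℂ) / 2) =
    Real.pi / Complex.sin (Real.pi * (s / 2 - (i : ℂ) / 2)) := by
  rw [← Complex.Gamma_mul_Gamma_one_sub, ← h]
  congr 2
  push_cast
  ring

lemma gs_sin (q d : ℕ) (s : ℂ) :
    (Real.pi / Complex.sin (Real.pi * (s / 2 - ((q + 2 * d : ℕ) : ℂ) / 2))) *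
    (Real.pi / Complex.sin (Real.pi * (s / 2 - ((q + 2 * d + 1 : ℕ) : ℂ) / 2))) =
    (Real.pi / Complex.sin (Real.pi * (s / 2 - ((q : ℕ) : ℂ) / 2))) *
    (Real.pi / Complex.sin (Real.pi * (s / 2 - ((q + 1 : ℕ) : ℂ) / 2))) := by
  induction d with
  | zero => simp
  | succ d ih =>
    rw [← ih]
    have e1 : (Real.pi * (s / 2 - ((q + 2 * (d + 1) : ℕ) : ℂ) / 2) : ℂ) =
        Real.pi * (s / 2 - ((q + 2 * d : ℕ) : ℂ) / 2) - Real.pi := by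
      push_cast; ring
    have e2 : (Real.pi * (s / 2 - ((q + 2 * (d + 1) + 1 : ℕ) : ℂ) / 2) : ℂ) =
        Real.pi * (s / 2 - ((q + 2 * d + 1 : ℕ) : ℂ) / 2) - Real.pi := by
      push_cast; ring
    rw [e1, e2, Complex.sin_sub_pi, Complex.sin_sub_pi, div_neg, div_neg, neg_mul_neg]

lemma gs_step (m k q : ℕ) (h : q + k + 2 = m) (s t : ℂ) (ht : t = ((2 * m : ℕ) : ℂ) + 1 - s) :
    (GammaStar (m + (k + 2)) (t / 2) * GammaStar (m - (k + 2)) (t / 2)) *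
      (GammaStar (m + k) (s / 2) * GammaStar (m - k) (s / 2)) =
    (GammaStar (m + (k + 2)) (s / 2) * GammaStar (m - (k + 2)) (s / 2)) *
      (GammaStar (m + k) (t / 2) * GammaStar (m - k) (t / 2)) := by
  have hp : m + k = q + 2 * (k + 1) := by omega
  have h1 : m + (k + 2) = m + k + 1 + 1 := by omega
  have h2 : m - (k + 2) = q := by omega
  have h3 : m - k = q + 1 + 1 := by omega
  rw [h1, h2, h3]
  have r1 := gs_refl m q (m + k + 1) (by omega) s
  have r2 := gs_refl m (q + 1) (m + k) (by omega) s
  have r3 := gs_refl m (m + k) (q + 1) (by omega) s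
  have r4 := gs_refl m (m + k + 1) q (by omega) s
  have r5 := gs_sin q (k + 1) s
  rw [← hp, ← r1, ← r2, ← r3, ← r4, ← ht] at r5
  have e : ∀ r z, GammaStar (r + 1) z = GammaStar r z * Complex.Gamma (z - (r : ℂ) / 2) :=
    fun r z => Finset.prod_range_succ _ _
  simp only [e]
  linear_combination (-(GammaStar (m + k) (t / 2) * GammaStar q (t / 2) *
    GammaStar (m + k) (s / 2) * GammaStar q (s / 2))) * r5

lemma gs_main_s12 (m : ℕ) (s t : ℂ) (ht : t = ((2 * m : ℕ) : ℂ) + 1 - s)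
    (h0 : ∀ r ≤ 2 * m, GammaStar r (s / 2) ≠ 0) (k i : ℕ) (h : k + 2 * i ≤ m) :
    (GammaStar (m + (k + 2 * i)) (t / 2) * GammaStar (m - (k + 2 * i)) (t / 2)) *
      (GammaStar (m + k) (s / 2) * GammaStar (m - k) (s / 2)) =
    (GammaStar (m + (k + 2 * i)) (s / 2) * GammaStar (m - (k + 2 * i)) (s / 2)) *
      (GammaStar (m + k) (t / 2) * GammaStar (m - k) (t / 2)) := by
  induction i with
  | zero => simp only [mul_zero, add_zero]; ring
  | succ i ih =>
    have ih := ih (by omega)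
    have st := gs_step m (k + 2 * i) (m - (k + 2 * i + 2)) (by omega) s t ht
    rw [show k + 2 * (i + 1) = k + 2 * i + 2 by ring]
    have n1 := mul_ne_zero (h0 (m + (k + 2 * i)) (by omega)) (h0 (m - (k + 2 * i)) (by omega))
    apply mul_right_cancel₀ n1
    linear_combination (GammaStar (m + k) (s / 2) * GammaStar (m - k) (s / 2)) * st +
      (GammaStar (m + (k + 2 * i + 2)) (s / 2) * GammaStar (m - (k + 2 * i + 2)) (s / 2)) * ih

lemma gs_div (m : ℕ) (s t : ℂ) (ht : t = ((2 * m : ℕ) : ℂ) + 1 - s)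
    (h0 : ∀ r ≤ 2 * m, GammaStar r (s / 2) ≠ 0) (h1 : ∀ r ≤ 2 * m, GammaStar r (t / 2) ≠ 0)
    (a b k i : ℕ) (h : k + 2 * i ≤ m)
    (hab : (a = m + (k + 2 * i) ∧ b = m - (k + 2 * i)) ∨
      (b = m + (k + 2 * i) ∧ a = m - (k + 2 * i))) :
    GammaStar (m + k) (t / 2) * GammaStar (m - k) (t / 2) /
      (GammaStar a (t / 2) * GammaStar b (t / 2)) =
    GammaStar (m + k) (s / 2) * GammaStar (m - k) (s / 2) /
      (GammaStar a (s / 2) * GammaStar b (s / 2)) := by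
  have hm := gs_main_s12 m s t ht h0 k i h
  rw [div_eq_div_iff (mul_ne_zero (h1 a (by omega)) (h1 b (by omega)))
    (mul_ne_zero (h0 a (by omega)) (h0 b (by omega)))]
  rcases hab with ⟨rfl, rfl⟩ | ⟨rfl, rfl⟩ <;> linear_combination -hm

lemma gs_ne_s12 (n : ℕ) (s : ℂ)
    (hs : ∀ j : ℤ, -1 ≤ j → j ≤ (n : ℤ) + 2 → ∀ m : ℤ, m ≤ 0 → (s - (j : ℂ)) / 2 ≠ (m : ℂ)) :
    ∀ r ≤ n, GammaStar r (s / 2) ≠ 0 := by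
  intro r hr
  refine Finset.prod_ne_zero_iff.mpr fun j hj => Complex.Gamma_ne_zero fun m hm => ?_
  have := Finset.mem_range.mp hj
  refine hs j (by omega) (by omega) (-m) (by omega) ?_
  push_cast
  rw [← hm]
  ring

/-- Lemma 3.6, `g₁` part: for even `n = a + b ≥ 2`, the Gamma factor `g₁` satisfies
`g₁(n+1−s) = g₁(s)` whenever no involved Gamma factor vanishes or has a pole. -/
theorem gamma_factor_FE_even_p1 (n : ℕ) (hn : 2 ≤ n) (heven : Even n)
    (a b : ℕ) (hab : a + b = n) (g₁ : ℂ → ℂ)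
    (hg_even : Even ((n : ℤ) / 2 - (a : ℤ)) → ∀ s : ℂ, g₁ s =
      GammaStar (n / 2) (s / 2) ^ 2 / (GammaStar a (s / 2) * GammaStar b (s / 2)))
    (hg_odd : ¬ Even ((n : ℤ) / 2 - (a : ℤ)) → ∀ s : ℂ, g₁ s =
      GammaStar (n / 2 + 1) (s / 2) * GammaStar (n / 2 - 1) (s / 2) /
        (GammaStar a (s / 2) * GammaStar b (s / 2)))
    (s : ℂ)
    (hs : ∀ j : ℤ, -1 ≤ j → j ≤ (n : ℤ) + 2 → ∀ m : ℤ, m ≤ 0 →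
      (s - (j : ℂ)) / 2 ≠ (m : ℂ) ∧ ((n : ℂ) + 1 - s - (j : ℂ)) / 2 ≠ (m : ℂ)) :
    g₁ ((n : ℂ) + 1 - s) = g₁ s := by
  obtain ⟨m, rfl⟩ := heven
  have h0 := gs_ne_s12 (m + m) s fun j h1 h2 l hl => (hs j h1 h2 l hl).1
  have h1 := gs_ne_s12 (m + m) _ fun j h1 h2 l hl => (hs j h1 h2 l hl).2
  rw [← two_mul] at h0 h1
  have e2 : (m + m) / 2 = m := by omega
  have e3 : ((m + m : ℕ) : ℤ) / 2 = m := by omega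
  rw [e3] at hg_even hg_odd
  rw [e2] at hg_even hg_odd
  have hd := gs_div m s (((m + m : ℕ) : ℂ) + 1 - s) (by rw [two_mul]) h0
    (by rw [← two_mul]; exact h1) a b
  by_cases hE : Even ((m : ℤ) - (a : ℤ))
  · have hg := hg_even hE
    obtain ⟨c, hc⟩ := hE
    have := hd 0 c.natAbs (by omega) (by omega)
    rw [hg, hg, sq, sq]
    exact this
  · have hg := hg_odd hE
    obtain ⟨c, hc⟩ := Int.not_even_iff_odd.mp hE
    have := hd 1 (((m : ℤ) - a).natAbs / 2) (by omega) (by omega)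
    rw [hg, hg]
    exact this
end

section
/- Let n ≥ 2 be an even integer and let a, b be nonnegative integers with a + b = n. For s ∈ ℂ define g₂(s) = Γ*_{n/2}((s+1)/2) · Γ*_{n/2}((s−1)/2) / (Γ*_a((s+1)/2) · Γ*_b((s−1)/2)) if n/2 − a is even, and g₂(s) = Γ*_{n/2+1}((s+1)/2) · Γ*_{n/2−1}((s−1)/2) / (Γ*_a((s+1)/2) · Γ*_b((s−1)/2)) if n/2 − a is odd. Then for every s ∈ ℂ such that for every integer j with −1 ≤ j ≤ n + 2 neither (s − j)/2 nor (n + 1 − s − j)/2 is a nonpositive integer (so that no Gamma factor involved vanishes or has a pole), one has g₂(n + 1 − s) = g₂(s). -/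
theorem gfe_sin_aux (a b c : ℕ) (h : a + b = 2 * c) (s : ℂ) :
    Complex.sin (Real.pi * ((s - 2 - b) / 2)) * Complex.sin (Real.pi * ((s - 1 - b) / 2)) =
    Complex.sin (Real.pi * ((s + 1 - a) / 2)) * Complex.sin (Real.pi * ((s - a) / 2)) := by
  have e1 : (Real.pi : ℂ) * ((s - 1 - b) / 2) = Real.pi * ((s - 2 - b) / 2) + Real.pi / 2 := by ring
  have e2 : (Real.pi : ℂ) * ((s + 1 - a) / 2) = Real.pi * ((s - a) / 2) + Real.pi / 2 := by ring
  rw [e1, e2, Complex.sin_add_pi_div_two, Complex.sin_add_pi_div_two]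
  have h1 := Complex.sin_two_mul (Real.pi * ((s - 2 - b) / 2))
  have h2 := Complex.sin_two_mul (Real.pi * ((s - a) / 2))
  have hc : (a : ℂ) = 2 * c - b := by
    have : (a : ℂ) + b = 2 * c := by exact_mod_cast h
    linear_combination this
  have h3 : Complex.sin (2 * (Real.pi * ((s - a) / 2))) =
      Complex.sin (2 * (Real.pi * ((s - 2 - b) / 2))) := by
    have : 2 * (Real.pi * ((s - a) / 2)) = 2 * (Real.pi * ((s - 2 - b) / 2)) +
        ((b : ℤ) - (c : ℤ) + 1 : ℤ) * (2 * Real.pi : ℂ) := by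
      rw [hc]; push_cast; ring
    rw [this, Complex.sin_add_int_mul_two_pi]
  linear_combination (h2 - h1 - h3) / 2

theorem gfe_step (a b c : ℕ) (h : a + b = 2 * c) (s t : ℂ) (ht : t = a + b + 3 - s) :
    (GammaStar (a + 2) ((t + 1) / 2) * GammaStar b ((t - 1) / 2)) *
      (GammaStar a ((s + 1) / 2) * GammaStar (b + 2) ((s - 1) / 2)) =
    (GammaStar (a + 2) ((s + 1) / 2) * GammaStar b ((s - 1) / 2)) *
      (GammaStar a ((t + 1) / 2) * GammaStar (b + 2) ((t - 1) / 2)) := by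
  have g1 := Complex.Gamma_mul_Gamma_one_sub ((s - 2 - b) / 2)
  have g2 := Complex.Gamma_mul_Gamma_one_sub ((s - 1 - b) / 2)
  have g3 := Complex.Gamma_mul_Gamma_one_sub ((s + 1 - a) / 2)
  have g4 := Complex.Gamma_mul_Gamma_one_sub ((s - a) / 2)
  have key : (Complex.Gamma ((s - 2 - b) / 2) * Complex.Gamma (1 - (s - 2 - b) / 2)) *
      (Complex.Gamma ((s - 1 - b) / 2) * Complex.Gamma (1 - (s - 1 - b) / 2)) =
      (Complex.Gamma ((s + 1 - a) / 2) * Complex.Gamma (1 - (s + 1 - a) / 2)) *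
      (Complex.Gamma ((s - a) / 2) * Complex.Gamma (1 - (s - a) / 2)) := by
    rw [g1, g2, g3, g4, div_mul_div_comm, div_mul_div_comm, gfe_sin_aux a b c h s]
  simp only [GammaStar, Finset.prod_range_succ]
  have x1 : (t + 1) / 2 - (a : ℂ) / 2 = 1 - (s - 2 - b) / 2 := by rw [ht]; ring
  have x2 : (t + 1) / 2 - ((a + 1 : ℕ) : ℂ) / 2 = 1 - (s - 1 - b) / 2 := by
    rw [ht]; push_cast; ring
  have x3 : (t - 1) / 2 - (b : ℂ) / 2 = 1 - (s - a) / 2 := by rw [ht]; ring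
  have x4 : (t - 1) / 2 - ((b + 1 : ℕ) : ℂ) / 2 = 1 - (s + 1 - a) / 2 := by
    rw [ht]; push_cast; ring
  have y1 : (s + 1) / 2 - (a : ℂ) / 2 = (s + 1 - a) / 2 := by ring
  have y2 : (s + 1) / 2 - ((a + 1 : ℕ) : ℂ) / 2 = (s - a) / 2 := by push_cast; ring
  have y3 : (s - 1) / 2 - (b : ℂ) / 2 = (s - 1 - b) / 2 := by ring
  have y4 : (s - 1) / 2 - ((b + 1 : ℕ) : ℂ) / 2 = (s - 2 - b) / 2 := by push_cast; ring
  rw [x1, x2, x3, x4, y1, y2, y3, y4]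
  linear_combination (∏ j ∈ Finset.range a, Complex.Gamma ((t + 1) / 2 - (j : ℂ) / 2)) *
    (∏ j ∈ Finset.range b, Complex.Gamma ((t - 1) / 2 - (j : ℂ) / 2)) *
    (∏ j ∈ Finset.range a, Complex.Gamma ((s + 1) / 2 - (j : ℂ) / 2)) *
    (∏ j ∈ Finset.range b, Complex.Gamma ((s - 1) / 2 - (j : ℂ) / 2)) * key

theorem gfe_ne (n a b : ℕ) (hab : a + b = n) (s : ℂ)
    (hs : ∀ j : ℤ, -1 ≤ j → j ≤ (n : ℤ) + 2 → ∀ m : ℤ, m ≤ 0 → (s - (j : ℂ)) / 2 ≠ (m : ℂ)) :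
    GammaStar a ((s + 1) / 2) * GammaStar b ((s - 1) / 2) ≠ 0 := by
  refine mul_ne_zero (Finset.prod_ne_zero_iff.2 fun j hj => ?_)
    (Finset.prod_ne_zero_iff.2 fun j hj => ?_)
  all_goals
    rw [Finset.mem_range] at hj
    refine Complex.Gamma_ne_zero fun m hm => ?_
  · refine hs (j - 1) (by omega) (by omega) (-m) (by omega) ?_
    push_cast
    rw [← hm]; ring
  · refine hs (j + 1) (by omega) (by omega) (-m) (by omega) ?_
    push_cast
    rw [← hm]; ring

theorem gfe_iter (c : ℕ) (s t : ℂ) (ht : t = (2 * c : ℕ) + 1 - s)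
    (h1 : ∀ a b, a + b = 2 * c → GammaStar a ((s + 1) / 2) * GammaStar b ((s - 1) / 2) ≠ 0)
    (h2 : ∀ a b, a + b = 2 * c → GammaStar a ((t + 1) / 2) * GammaStar b ((t - 1) / 2) ≠ 0)
    (i : ℕ) : ∀ a b, a + 2 * i + b = 2 * c →
    (GammaStar (a + 2 * i) ((t + 1) / 2) * GammaStar b ((t - 1) / 2)) /
      (GammaStar (a + 2 * i) ((s + 1) / 2) * GammaStar b ((s - 1) / 2)) =
    (GammaStar a ((t + 1) / 2) * GammaStar (b + 2 * i) ((t - 1) / 2)) /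
      (GammaStar a ((s + 1) / 2) * GammaStar (b + 2 * i) ((s - 1) / 2)) := by
  induction i with
  | zero => intro a b _; rfl
  | succ i ih =>
    intro a b h
    have hi := ih a (b + 2) (by omega)
    have e : b + 2 + 2 * i = b + 2 * (i + 1) := by ring
    rw [e] at hi
    rw [← hi]
    have e' : a + 2 * (i + 1) = a + 2 * i + 2 := by ring
    rw [e', div_eq_div_iff (h1 _ _ (by omega)) (h1 _ _ (by omega))]
    have hh : ((a + 2 * i : ℕ) : ℂ) + b + 2 = (2 * c : ℕ) := by
      rw [← h]; push_cast; ring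
    have := gfe_step (a + 2 * i) b (c - 1) (by omega) s t (by rw [ht, ← hh]; ring)
    rw [this]; ring

theorem gfe_main (c : ℕ) (s t : ℂ) (ht : t = (2 * c : ℕ) + 1 - s)
    (h1 : ∀ a b, a + b = 2 * c → GammaStar a ((s + 1) / 2) * GammaStar b ((s - 1) / 2) ≠ 0)
    (h2 : ∀ a b, a + b = 2 * c → GammaStar a ((t + 1) / 2) * GammaStar b ((t - 1) / 2) ≠ 0)
    (a b p q : ℕ) (hab : a + b = 2 * c) (hpq : p + q = 2 * c) (hp : Even ((p : ℤ) - a)) :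
    GammaStar p ((t + 1) / 2) * GammaStar q ((t - 1) / 2) /
      (GammaStar a ((t + 1) / 2) * GammaStar b ((t - 1) / 2)) =
    GammaStar p ((s + 1) / 2) * GammaStar q ((s - 1) / 2) /
      (GammaStar a ((s + 1) / 2) * GammaStar b ((s - 1) / 2)) := by
  have key : (GammaStar p ((t + 1) / 2) * GammaStar q ((t - 1) / 2)) /
      (GammaStar p ((s + 1) / 2) * GammaStar q ((s - 1) / 2)) =
      (GammaStar a ((t + 1) / 2) * GammaStar b ((t - 1) / 2)) /
      (GammaStar a ((s + 1) / 2) * GammaStar b ((s - 1) / 2)) := by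
    obtain ⟨r, hr⟩ := hp
    rcases le_total 0 r with h0 | h0
    · obtain ⟨i, rfl⟩ := Int.eq_ofNat_of_zero_le h0
      obtain rfl : p = a + 2 * i := by omega
      obtain rfl : b = q + 2 * i := by omega
      exact gfe_iter c s t ht h1 h2 i a q (by omega)
    · obtain ⟨i, hi⟩ := Int.eq_ofNat_of_zero_le (neg_nonneg.2 h0)
      obtain rfl : a = p + 2 * i := by omega
      obtain rfl : q = b + 2 * i := by omega
      exact (gfe_iter c s t ht h1 h2 i p b (by omega)).symm
  rw [div_eq_div_iff (h1 _ _ hpq) (h1 _ _ hab)] at key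
  rw [div_eq_div_iff (h2 _ _ hab) (h1 _ _ hab), key]
  ring

/-- Lemma 3.6, `g₂` part: for even `n = a + b ≥ 2`, the Gamma factor `g₂` satisfies
`g₂(n+1−s) = g₂(s)` whenever no involved Gamma factor vanishes or has a pole. -/
theorem gamma_factor_FE_even_p3 (n : ℕ) (hn : 2 ≤ n) (heven : Even n)
    (a b : ℕ) (hab : a + b = n) (g₂ : ℂ → ℂ)
    (hg_even : Even ((n : ℤ) / 2 - (a : ℤ)) → ∀ s : ℂ, g₂ s =
      GammaStar (n / 2) ((s + 1) / 2) * GammaStar (n / 2) ((s - 1) / 2) /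
        (GammaStar a ((s + 1) / 2) * GammaStar b ((s - 1) / 2)))
    (hg_odd : ¬ Even ((n : ℤ) / 2 - (a : ℤ)) → ∀ s : ℂ, g₂ s =
      GammaStar (n / 2 + 1) ((s + 1) / 2) * GammaStar (n / 2 - 1) ((s - 1) / 2) /
        (GammaStar a ((s + 1) / 2) * GammaStar b ((s - 1) / 2)))
    (s : ℂ)
    (hs : ∀ j : ℤ, -1 ≤ j → j ≤ (n : ℤ) + 2 → ∀ m : ℤ, m ≤ 0 →
      (s - (j : ℂ)) / 2 ≠ (m : ℂ) ∧ ((n : ℂ) + 1 - s - (j : ℂ)) / 2 ≠ (m : ℂ)) :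
    g₂ ((n : ℂ) + 1 - s) = g₂ s := by
  obtain ⟨c, hc⟩ := heven
  obtain rfl : n = 2 * c := by omega
  have h1 := fun a b h => gfe_ne (2 * c) a b h s fun j hj hj' m hm => (hs j hj hj' m hm).1
  have h2 := fun a b h => gfe_ne (2 * c) a b h (((2 * c : ℕ) : ℂ) + 1 - s)
    fun j hj hj' m hm => (hs j hj hj' m hm).2
  by_cases he : Even (((2 * c : ℕ) : ℤ) / 2 - (a : ℤ))
  · rw [hg_even he, hg_even he]
    refine gfe_main c s _ rfl h1 h2 a b _ _ hab (by omega) ?_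
    exact_mod_cast he
  · rw [hg_odd he, hg_odd he]
    refine gfe_main c s _ rfl h1 h2 a b _ _ hab (by omega) ?_
    rw [Int.not_even_iff_odd] at he
    obtain ⟨r, hr⟩ := he
    exact ⟨r + 1, by omega⟩
end
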